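/- arXiv:2412.00389 — 2 statements merged into one kernel-verified Lean document; each statement's English description precedes it below -/
import Mathlib

section
/- Let f(n) = b_d·n^d + ... + b_0 be a polynomial with integer coefficients such that b_d > 0, gcd(b_d, ..., b_0) = 1, and f(n) is a positive integer for every positive integer n. Then there exist constants c_1, c_2 > 0 depending only on f such that for every real x ≥ 1 and every real t > 0, #{n ≤ x : f(n)/φ(f(n)) > t} ≤ c_1 · exp(−exp(c_2·t)) · x, where n runs over positive integers. -/
/-!
Write `m / φ(m) = ∏_{p ∣ m} (1 - 1/p)⁻¹` and bound the `k`-th moment of this ratio over the values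
`f(1), ..., f(N)`. Put `y = ⌊log₄ N⌋`. As `log |f(n)| = O(y + 1)`, there are only `O(y + 1)` primes
`p > y` dividing `f(n)`, and together they contribute a bounded factor. The primes `p ≤ y` have
product at most `4 ^ y ≤ N`, so by the Chinese remainder theorem their contributions average out
independently. A prime `p ≤ k` contributes at most `(1 - 1/p)⁻ᵏ` on average, in total
`O(1 + log k) ^ k` by Mertens. A prime `p > k` contributes at most `exp (4dk / p²)`, as a primitive
`f` of degree `d` has at most `d` roots modulo `p`, in total `O(1)`. So the `k`-th moment is
`O(1 + log k) ^ k`, and Markov's inequality with `k ≈ exp (c t)` gives the doubly exponential tail.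
The content of a general `f` only costs a constant factor, because `a b / φ(a b)` is at most
`(a / φ(a)) (b / φ(b))`.
-/

open Finset Polynomial Real

theorem sum_primesLE_log_div_le (n : ℕ) : ∑ p ∈ n.primesLE, log p / p ≤ 2 * log n := by
  obtain rfl | hn := n.eq_zero_or_pos
  · simp
  have prod_le : ∏ p ∈ n.primesLE, p ^ (n / p) ≤ n ^ n := by
    refine (Nat.le_of_dvd n.factorial_pos ?_).trans n.factorial_le_pow
    refine prod_dvd_of_isRelPrime (fun p hp q hq hpq ↦ ?_) fun p hp ↦ ?_
    · exact Nat.coprime_iff_isRelPrime.1 <| Nat.Coprime.pow _ _ <|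
        (Nat.coprime_primes (Nat.prime_of_mem_primesLE hp) (Nat.prime_of_mem_primesLE hq)).2 hpq
    · refine ((Nat.prime_of_mem_primesLE hp).pow_dvd_factorial_iff
        (Nat.lt_add_of_pos_right two_pos)).2 ?_
      have one_mem : 1 ∈ Ico 1 (Nat.log p n + 2) := by simp
      simpa only [pow_one] using
        single_le_sum (f := fun i ↦ n / p ^ i) (fun _ _ ↦ Nat.zero_le _) one_mem
  have sum_floor_le : ∑ p ∈ n.primesLE, ((n / p : ℕ) : ℝ) * log p ≤ n * log n := by
    have hlog : log (∏ p ∈ n.primesLE, (p : ℝ) ^ (n / p)) ≤ log ((n : ℝ) ^ n) :=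
      log_le_log (prod_pos fun p hp ↦ pow_pos (mod_cast (Nat.prime_of_mem_primesLE hp).pos) _)
        (mod_cast prod_le)
    rw [log_prod fun p hp ↦ pow_ne_zero _ (mod_cast (Nat.prime_of_mem_primesLE hp).ne_zero)] at hlog
    simpa only [log_pow] using hlog
  have le_floor : ∀ p ∈ n.primesLE, (n / 2 : ℝ) * (log p / p) ≤ ((n / p : ℕ) : ℝ) * log p := by
    intro p hp
    have hp₀ := (Nat.prime_of_mem_primesLE hp).pos
    have hfloor : n ≤ 2 * (n / p * p) := by
      have := Nat.mul_le_mul_right p ((Nat.one_le_div_iff hp₀).2 (Nat.le_of_mem_primesLE hp))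
      have := n.lt_div_mul_add hp₀
      lia
    calc (n / 2 : ℝ) * (log p / p) = n / 2 / p * log p := by ring
      _ ≤ ((n / p : ℕ) : ℝ) * log p := by
        gcongr
        rw [div_le_iff₀ (mod_cast hp₀), div_le_iff₀ two_pos, mul_comm _ (2 : ℝ)]
        exact_mod_cast hfloor
  have := (sum_le_sum le_floor).trans sum_floor_le
  rw [← mul_sum] at this
  have : (0 : ℝ) < n := mod_cast hn
  nlinarith

theorem tsum_nat_rpow_neg_le {s : ℝ} (hs : 1 < s) : ∑' n : ℕ, (n : ℝ) ^ (-s) ≤ 1 + (s - 1)⁻¹ := by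
  have hsum : Summable fun n : ℕ ↦ (n : ℝ) ^ (-s) := summable_nat_rpow.2 (by linarith)
  have hzeta := ZetaAsymptotics.zeta_limit_aux1 hs
  have hterm : 0 ≤ ZetaAsymptotics.termTSum s :=
    tsum_nonneg fun n ↦ ZetaAsymptotics.term_nonneg (n + 1) s
  rw [hsum.tsum_eq_zero_add, Nat.cast_zero, zero_rpow (by linarith), zero_add]
  simp only [Nat.cast_add_one, rpow_neg (Nat.cast_add_one_pos _).le, ← one_div] at hzeta ⊢
  nlinarith

theorem prod_primesLE_inv_one_sub_rpow_neg_le {s : ℝ} (hs : 1 < s) (n : ℕ) :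
    ∏ p ∈ n.primesLE, (1 - (p : ℝ) ^ (-s))⁻¹ ≤ 1 + (s - 1)⁻¹ := by
  let g : ℕ →* ℝ :=
    { toFun := fun m ↦ (m : ℝ) ^ (-s)
      map_one' := by simp
      map_mul' := fun a b ↦ by rw [Nat.cast_mul, mul_rpow a.cast_nonneg b.cast_nonneg] }
  have hg : Summable g := summable_nat_rpow.2 (by linarith)
  calc ∏ p ∈ n.primesLE, (1 - (p : ℝ) ^ (-s))⁻¹
      = ∑' m : (n + 1).smoothNumbers, g m :=
        EulerProduct.prod_primesBelow_geometric_eq_tsum_smoothNumbers hg (n + 1)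
    _ ≤ ∑' m, g m := hg.tsum_subtype_le g _ fun m ↦ rpow_nonneg m.cast_nonneg _
    _ ≤ 1 + (s - 1)⁻¹ := tsum_nat_rpow_neg_le hs

/-- The Euler factor `(1 - 1/p)⁻¹` at a prime `p`; `m / φ(m)` is the product of these factors over
the primes dividing `m`. -/
noncomputable def eulerFactor (p : ℕ) : ℝ := (1 - (p : ℝ)⁻¹)⁻¹

theorem eulerFactor_nonneg (p : ℕ) : 0 ≤ eulerFactor p :=
  inv_nonneg.2 (sub_nonneg.2 p.cast_inv_le_one)

theorem eulerFactor_eq_one_add {p : ℕ} (hp : 1 < p) : eulerFactor p = 1 + ((p : ℝ) - 1)⁻¹ := by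
  have hp' : (1 : ℝ) < p := mod_cast hp
  have hp₁ : (p : ℝ) - 1 ≠ 0 := by linarith
  rw [eulerFactor]
  field_simp
  ring

theorem one_le_eulerFactor {p : ℕ} (hp : 1 < p) : 1 ≤ eulerFactor p := by
  rw [eulerFactor_eq_one_add hp, le_add_iff_nonneg_right, inv_nonneg, sub_nonneg]
  exact_mod_cast hp.le

theorem eulerFactor_le_exp {p : ℕ} (hp : 1 < p) : eulerFactor p ≤ exp ((p : ℝ) - 1)⁻¹ := by
  rw [eulerFactor_eq_one_add hp, add_comm]
  exact add_one_le_exp _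

theorem eulerFactor_le_exp_mul_inv_one_sub_rpow {p : ℕ} (hp : 1 < p) {δ : ℝ} (hδ : 0 ≤ δ) :
    eulerFactor p ≤ exp (2 * δ * (log p / p)) * (1 - (p : ℝ) ^ (-(1 + δ)))⁻¹ := by
  have hp' : (2 : ℝ) ≤ p := mod_cast hp
  have hp₀ : (0 : ℝ) < p := by linarith
  set u := (p : ℝ)⁻¹ with hu
  set e := exp (-(δ * log p))
  have hu₀ : 0 < u := by positivity
  have hu₁ : u ≤ 1 / 2 := by rw [hu, one_div]; gcongr
  have he₁ : e ≤ 1 := exp_le_one_iff.2 (neg_nonpos.2 (mul_nonneg hδ (log_natCast_nonneg p)))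
  have hlog : 1 - e ≤ δ * log p := by linarith [add_one_le_exp (-(δ * log p))]
  have hpow : (p : ℝ) ^ (-(1 + δ)) = u * e := by
    rw [neg_add, rpow_add hp₀, rpow_neg_one, rpow_def_of_pos hp₀, mul_neg,
      mul_comm (log _)]
  have hue : u * e < 1 := by nlinarith [exp_pos (-(δ * log p))]
  rw [hpow, ← div_eq_mul_inv, le_div_iff₀ (by linarith)]
  calc eulerFactor p * (1 - u * e) = 1 + u * (1 - e) * (1 - u)⁻¹ := by
        have : 1 - u ≠ 0 := by linarith
        rw [eulerFactor, ← hu]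
        field_simp
        ring
    _ ≤ 1 + u * (δ * log p) * 2 := by
        gcongr
        · exact inv_nonneg.2 (by linarith)
        · rw [inv_le_comm₀ (by linarith) two_pos]; linarith
    _ = 2 * δ * (log p / p) + 1 := by rw [hu]; ring
    _ ≤ exp (2 * δ * (log p / p)) := add_one_le_exp _

-- Rankin's trick: shift the exponent of the Euler product from `1` to `1 + 1 / (1 + log n)`.
theorem prod_primesLE_eulerFactor_le (n : ℕ) :
    ∏ p ∈ n.primesLE, eulerFactor p ≤ exp 4 * (2 + log n) := by
  have hlog := log_natCast_nonneg n
  set δ := (1 + log n)⁻¹ with hδ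
  have hδ₀ : 0 < δ := by positivity
  have hδlog : δ * log n ≤ 1 := by
    rw [hδ, inv_mul_le_one₀ (by linarith)]; linarith
  have hsum := sum_primesLE_log_div_le n
  calc ∏ p ∈ n.primesLE, eulerFactor p
      ≤ ∏ p ∈ n.primesLE, exp (2 * δ * (log p / p)) * (1 - (p : ℝ) ^ (-(1 + δ)))⁻¹ :=
        prod_le_prod (fun p _ ↦ eulerFactor_nonneg p) fun p hp ↦
          eulerFactor_le_exp_mul_inv_one_sub_rpow (Nat.one_lt_of_mem_primesLE hp) hδ₀.le
    _ = exp (2 * δ * ∑ p ∈ n.primesLE, log p / p) *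
          ∏ p ∈ n.primesLE, (1 - (p : ℝ) ^ (-(1 + δ)))⁻¹ := by
        rw [prod_mul_distrib, ← exp_sum, ← mul_sum]
    _ ≤ exp 4 * (1 + (1 + δ - 1)⁻¹) := by
        refine mul_le_mul (exp_le_exp.2 ?_)
          (prod_primesLE_inv_one_sub_rpow_neg_le (by linarith) n) ?_ (exp_pos 4).le
        · nlinarith
        · refine prod_nonneg fun p hp ↦ inv_nonneg.2 (sub_nonneg.2 ?_)
          exact rpow_le_one_of_one_le_of_nonpos
            (mod_cast (Nat.one_lt_of_mem_primesLE hp).le) (by linarith)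
    _ = exp 4 * (2 + log n) := by
        rw [add_sub_cancel_left, hδ, inv_inv]; ring

theorem sum_range_mul_of_periodic {M : Type*} [AddCommMonoid M] {g : ℕ → M} {m : ℕ}
    (hg : Function.Periodic g m) (q : ℕ) :
    ∑ n ∈ range (q * m), g n = q • ∑ n ∈ range m, g n := by
  induction q with
  | zero => simp
  | succ q ih =>
    have shift (n : ℕ) : g (q * m + n) = g n := by
      rw [add_comm]
      exact hg.nat_mul q n
    rw [Nat.succ_mul, sum_range_add, ih, succ_nsmul, sum_congr rfl fun n _ ↦ shift n]

theorem sum_Icc_le_of_periodic {g : ℕ → ℝ} {m : ℕ} (hm : 0 < m) (hg : Function.Periodic g m)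
    (hg₀ : ∀ n, 0 ≤ g n) (N : ℕ) :
    ∑ n ∈ Icc 1 N, g n ≤ (N / m + 1 : ℕ) * ∑ n ∈ range m, g n := by
  rw [← nsmul_eq_mul, ← sum_range_mul_of_periodic hg]
  refine sum_le_sum_of_subset_of_nonneg (fun n hn ↦ mem_range.2 ?_) fun n _ _ ↦ hg₀ n
  exact (mem_Icc.1 hn).2.trans_lt (Nat.lt_div_mul_add hm |>.trans_eq (Nat.succ_mul _ _).symm)

section ChineseRemainder

variable {R : Type*} [CommSemiring R]

theorem sum_range_mul_mul_of_coprime_of_periodic {a b : ℕ} (hab : a.Coprime b) {g h : ℕ → R}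
    (hg : Function.Periodic g a) (hh : Function.Periodic h b) :
    ∑ n ∈ range (a * b), g n * h n = (∑ n ∈ range a, g n) * ∑ n ∈ range b, h n := by
  obtain rfl | ha := eq_or_ne a 0
  · simp
  obtain rfl | hb := eq_or_ne b 0
  · simp
  rw [sum_mul_sum, ← sum_product']
  refine sum_nbij' (fun n ↦ (n % a, n % b)) (fun x ↦ Nat.chineseRemainder hab x.1 x.2)
    (fun n _ ↦ ?_) (fun x _ ↦ ?_) (fun n hn ↦ ?_) (fun x hx ↦ ?_) fun n _ ↦ ?_
  · exact mem_product.2 ⟨mem_range.2 (n.mod_lt (Nat.pos_of_ne_zero ha)),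
      mem_range.2 (n.mod_lt (Nat.pos_of_ne_zero hb))⟩
  · exact mem_range.2 (Nat.chineseRemainder_lt_mul hab _ _ ha hb)
  · exact (Nat.chineseRemainder_modEq_unique hab (n.mod_modEq a).symm
      (n.mod_modEq b).symm).symm.eq_of_lt_of_lt (Nat.chineseRemainder_lt_mul hab _ _ ha hb)
      (mem_range.1 hn)
  · obtain ⟨hx₁, hx₂⟩ := mem_product.1 hx
    obtain ⟨h₁, h₂⟩ := (Nat.chineseRemainder hab x.1 x.2).2
    exact Prod.ext (Nat.mod_eq_of_modEq h₁ (mem_range.1 hx₁))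
      (Nat.mod_eq_of_modEq h₂ (mem_range.1 hx₂))
  · rw [hg.map_mod_nat, hh.map_mod_nat]

theorem periodic_prod_of_periodic {ι : Type*} (s : Finset ι) (m : ι → ℕ) {g : ι → ℕ → R}
    (hg : ∀ i ∈ s, Function.Periodic (g i) (m i)) :
    Function.Periodic (fun n ↦ ∏ i ∈ s, g i n) (∏ i ∈ s, m i) := by
  intro n
  refine prod_congr rfl fun i hi ↦ ?_
  obtain ⟨k, hk⟩ := dvd_prod_of_mem m hi
  rw [hk, mul_comm]
  exact (hg i hi).nat_mul k n

theorem sum_range_prod_of_pairwise_coprime_of_periodic {ι : Type*} (s : Finset ι) {m : ι → ℕ}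
    (hm : (s : Set ι).Pairwise (Function.onFun Nat.Coprime m)) {g : ι → ℕ → R}
    (hg : ∀ i ∈ s, Function.Periodic (g i) (m i)) :
    ∑ n ∈ range (∏ i ∈ s, m i), ∏ i ∈ s, g i n = ∏ i ∈ s, ∑ n ∈ range (m i), g i n := by
  classical
  induction s using Finset.induction_on with
  | empty => simp
  | insert i s hi ih =>
    have hg' : ∀ j ∈ s, Function.Periodic (g j) (m j) := fun j hj ↦ hg j (mem_insert_of_mem hj)
    have hcop : (m i).Coprime (∏ j ∈ s, m j) := Nat.Coprime.prod_right fun j hj ↦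
      hm (mem_insert_self i s) (mem_insert_of_mem hj) (ne_of_mem_of_not_mem hj hi).symm
    simp only [prod_insert hi]
    rw [sum_range_mul_mul_of_coprime_of_periodic hcop (hg i (mem_insert_self i s))
      (periodic_prod_of_periodic s m hg'), ih (hm.mono (mod_cast subset_insert i s)) hg']

end ChineseRemainder

/-- The ratio `m / φ(m)`; it is `0` at `m = 0`. -/
noncomputable def totientRatio (m : ℕ) : ℝ := m / Nat.totient m

theorem totientRatio_nonneg (m : ℕ) : 0 ≤ totientRatio m := by
  unfold totientRatio; positivity

theorem totientRatio_pos {m : ℕ} (hm : m ≠ 0) : 0 < totientRatio m :=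
  div_pos (mod_cast Nat.pos_of_ne_zero hm) (mod_cast Nat.totient_pos.2 (Nat.pos_of_ne_zero hm))

theorem totientRatio_mul_le (a b : ℕ) :
    totientRatio (a * b) ≤ totientRatio a * totientRatio b := by
  obtain rfl | ha := a.eq_zero_or_pos
  · simp [totientRatio]
  obtain rfl | hb := b.eq_zero_or_pos
  · simp [totientRatio]
  have hφ : 0 < Nat.totient a * Nat.totient b :=
    Nat.mul_pos (Nat.totient_pos.2 ha) (Nat.totient_pos.2 hb)
  unfold totientRatio
  rw [div_mul_div_comm, Nat.cast_mul]
  exact div_le_div_of_nonneg_left (by positivity) (mod_cast hφ)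
    (mod_cast Nat.totient_super_multiplicative a b)

theorem totientRatio_eq_prod_eulerFactor {m : ℕ} (hm : m ≠ 0) :
    totientRatio m = ∏ p ∈ m.primeFactors, eulerFactor p := by
  have htotient : (Nat.totient m : ℝ) = m * ∏ p ∈ m.primeFactors, (1 - (p : ℝ)⁻¹) := by
    rw [← Rat.cast_natCast, m.totient_eq_mul_prod_factors]
    push_cast
    rfl
  simp only [totientRatio, eulerFactor, htotient, prod_inv_distrib]
  rw [← div_div, div_self (Nat.cast_ne_zero.2 hm), one_div]

theorem card_primeFactors_le_log_two {m : ℕ} (hm : m ≠ 0) : #m.primeFactors ≤ Nat.log 2 m := by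
  refine (Nat.le_log_iff_pow_le one_lt_two hm).2 ?_
  calc 2 ^ #m.primeFactors ≤ ∏ p ∈ m.primeFactors, p :=
        pow_card_le_prod _ _ _ fun p hp ↦ (Nat.prime_of_mem_primeFactors hp).two_le
    _ ≤ m := Nat.le_of_dvd (Nat.pos_of_ne_zero hm) m.prod_primeFactors_dvd

theorem prod_eulerFactor_le_exp_card {T : Finset ℕ} {y : ℕ} (hprime : ∀ p ∈ T, p.Prime)
    (hT : ∀ p ∈ T, y < p) : ∏ p ∈ T, eulerFactor p ≤ exp (2 * #T / (y + 1)) := by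
  calc ∏ p ∈ T, eulerFactor p ≤ ∏ _p ∈ T, exp (2 / (y + 1)) := by
        refine prod_le_prod (fun p _ ↦ eulerFactor_nonneg p) fun p hp ↦ ?_
        have hp₂ : (2 : ℝ) ≤ p := mod_cast (hprime p hp).two_le
        have hyp : (y + 1 : ℝ) ≤ p := mod_cast hT p hp
        refine (eulerFactor_le_exp (hprime p hp).one_lt).trans (exp_le_exp.2 ?_)
        rw [← one_div, div_le_div_iff₀ (by linarith) (by positivity)]
        linarith
    _ = exp (2 * #T / (y + 1)) := by
        rw [prod_const, ← exp_nat_mul]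
        ring_nf

theorem totientRatio_le_exp_mul_prod {m : ℕ} (hm : m ≠ 0) (y : ℕ) :
    totientRatio m ≤
      exp (2 * Nat.log 2 m / (y + 1)) * ∏ p ∈ y.primesLE with p ∣ m, eulerFactor p := by
  have hsmall : {p ∈ m.primeFactors | p ≤ y} = {p ∈ y.primesLE | p ∣ m} := by
    ext p
    simp only [mem_filter, Nat.mem_primeFactors, Nat.mem_primesLE]
    tauto
  have hlarge : ∏ p ∈ m.primeFactors with ¬p ≤ y, eulerFactor p ≤
      exp (2 * Nat.log 2 m / (y + 1)) := by
    refine (prod_eulerFactor_le_exp_card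
      (fun p hp ↦ Nat.prime_of_mem_primeFactors (mem_filter.1 hp).1)
      fun p hp ↦ not_le.1 (mem_filter.1 hp).2).trans ?_
    gcongr
    exact (card_filter_le _ _).trans (card_primeFactors_le_log_two hm)
  rw [totientRatio_eq_prod_eulerFactor hm, ← prod_filter_mul_prod_filter_not _ (· ≤ y), hsmall,
    mul_comm]
  gcongr
  exact prod_nonneg fun p _ ↦ eulerFactor_nonneg p

theorem natAbs_eval_le_mul_pow (f : ℤ[X]) {n M : ℕ} (hM : 0 < M) (hn : n ≤ M) :
    (f.eval (n : ℤ)).natAbs ≤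
      (∑ i ∈ range (f.natDegree + 1), (f.coeff i).natAbs) * M ^ f.natDegree := by
  rw [eval_eq_sum_range, sum_mul]
  refine (Int.natAbs_sum_le _ _).trans (sum_le_sum fun i hi ↦ ?_)
  rw [Int.natAbs_mul, Int.natAbs_pow, Int.natAbs_natCast]
  gcongr
  exact Nat.lt_succ_iff.1 (mem_range.1 hi)

theorem exists_log_two_natAbs_eval_le (f : ℤ[X]) :
    ∃ c : ℕ, ∀ n N : ℕ, n ≤ N → Nat.log 2 (f.eval (n : ℤ)).natAbs ≤ c * (Nat.log 4 N + 1) := by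
  set B := ∑ i ∈ range (f.natDegree + 1), (f.coeff i).natAbs
  refine ⟨B + 2 * f.natDegree, fun n N hn ↦ ?_⟩
  set y := Nat.log 4 N
  have hN : n ≤ 4 ^ (y + 1) := hn.trans (Nat.lt_pow_succ_log_self (by norm_num) N).le
  have hsize : (f.eval (n : ℤ)).natAbs ≤ 2 ^ ((B + 2 * f.natDegree) * (y + 1)) :=
    calc (f.eval (n : ℤ)).natAbs ≤ B * (4 ^ (y + 1)) ^ f.natDegree :=
          natAbs_eval_le_mul_pow f (by positivity) hN
      _ ≤ 2 ^ (B * (y + 1)) * (4 ^ (y + 1)) ^ f.natDegree := by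
          gcongr
          exact B.lt_two_pow_self.le.trans
            (Nat.pow_le_pow_right two_pos (Nat.le_mul_of_pos_right B y.succ_pos))
      _ = 2 ^ ((B + 2 * f.natDegree) * (y + 1)) := by
          rw [show 4 = 2 ^ 2 by rfl, ← pow_mul, ← pow_mul, ← pow_add]
          ring_nf
  exact (Nat.log_mono_right hsize).trans_eq (Nat.log_pow one_lt_two _)

theorem card_filter_dvd_eval_le_natDegree {f : ℤ[X]} (hf : f.IsPrimitive) {p : ℕ}
    (hp : p.Prime) : #{a ∈ range p | (p : ℤ) ∣ f.eval ((a : ℕ) : ℤ)} ≤ f.natDegree := by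
  have : Fact p.Prime := ⟨hp⟩
  set F := f.map (Int.castRingHom (ZMod p)) with hF
  have hF₀ : F ≠ 0 := by
    intro h
    have hdvd : C (p : ℤ) ∣ f := (C_dvd_iff_dvd_coeff _ _).2 fun i ↦ by
      have hi : F.coeff i = 0 := by rw [h, coeff_zero]
      rw [hF, coeff_map] at hi
      exact (ZMod.intCast_zmod_eq_zero_iff_dvd _ p).1 hi
    exact hp.one_lt.ne' (by simpa [Int.isUnit_iff_natAbs_eq] using hf _ hdvd)
  calc #{a ∈ range p | (p : ℤ) ∣ f.eval ((a : ℕ) : ℤ)} ≤ #F.roots.toFinset := by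
        refine card_le_card_of_injOn (fun a ↦ (a : ZMod p)) (fun a ha ↦ ?_) fun a ha b hb hab ↦ ?_
        · refine Multiset.mem_toFinset.2 ((mem_roots hF₀).2 ?_)
          rw [IsRoot.def, hF, eval_natCast_map]
          exact (ZMod.intCast_zmod_eq_zero_iff_dvd _ p).2 (mem_filter.1 ha).2
        · exact Nat.ModEq.eq_of_lt_of_lt ((ZMod.natCast_eq_natCast_iff a b p).1 hab)
            (mem_range.1 (mem_filter.1 ha).1) (mem_range.1 (mem_filter.1 hb).1)
    _ ≤ F.natDegree := (Multiset.toFinset_card_le _).trans (card_roots' F)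
    _ ≤ f.natDegree := natDegree_map_le

/-- The weight `w` on the `n` for which `p ∣ f(n)`, and `1` elsewhere. Products of such weights over
small primes majorize the powers of `totientRatio |f(n)|`. -/
noncomputable def rootWeight (f : ℤ[X]) (w : ℝ) (p n : ℕ) : ℝ :=
  if (p : ℤ) ∣ f.eval (n : ℤ) then w else 1

theorem rootWeight_nonneg (f : ℤ[X]) {w : ℝ} (hw : 0 ≤ w) (p n : ℕ) : 0 ≤ rootWeight f w p n := by
  unfold rootWeight
  split_ifs
  exacts [hw, zero_le_one]

theorem periodic_rootWeight (f : ℤ[X]) (w : ℝ) (p : ℕ) :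
    Function.Periodic (rootWeight f w p) p := by
  intro n
  have hdvd : (p : ℤ) ∣ f.eval ((n + p : ℕ) : ℤ) - f.eval (n : ℤ) := by
    simpa using sub_dvd_eval_sub ((n + p : ℕ) : ℤ) n f
  simp only [rootWeight, dvd_iff_dvd_of_dvd_sub hdvd]

/-- The mean of `rootWeight f w p` over a period. -/
noncomputable def rootMean (f : ℤ[X]) (w : ℝ) (p : ℕ) : ℝ :=
  (∑ a ∈ range p, rootWeight f w p a) / p

theorem rootMean_nonneg (f : ℤ[X]) {w : ℝ} (hw : 0 ≤ w) (p : ℕ) : 0 ≤ rootMean f w p :=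
  div_nonneg (sum_nonneg fun a _ ↦ rootWeight_nonneg f hw p a) p.cast_nonneg

theorem rootMean_le (f : ℤ[X]) {w : ℝ} (hw : 1 ≤ w) (p : ℕ) : rootMean f w p ≤ w := by
  refine div_le_of_le_mul₀ p.cast_nonneg (by linarith) ?_
  calc ∑ a ∈ range p, rootWeight f w p a ≤ #(range p) • w :=
        sum_le_card_nsmul _ _ _ fun a _ ↦ ite_le_sup _ _ _ |>.trans_eq (sup_eq_left.2 hw)
    _ = w * p := by rw [card_range, nsmul_eq_mul, mul_comm]

theorem rootMean_le_one_add {f : ℤ[X]} (hf : f.IsPrimitive) {w : ℝ} (hw : 1 ≤ w) {p : ℕ}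
    (hp : p.Prime) : rootMean f w p ≤ 1 + f.natDegree * (w - 1) / p := by
  have hp₀ : (p : ℝ) ≠ 0 := mod_cast hp.ne_zero
  have weight_eq (a : ℕ) :
      rootWeight f w p a = 1 + if (p : ℤ) ∣ f.eval (a : ℤ) then w - 1 else 0 := by
    unfold rootWeight
    split_ifs <;> ring
  calc rootMean f w p
      = 1 + #{a ∈ range p | (p : ℤ) ∣ f.eval ((a : ℕ) : ℤ)} * (w - 1) / p := by
        simp only [rootMean, weight_eq, sum_add_distrib, ← sum_filter, sum_const, card_range,
          nsmul_eq_mul, mul_one, add_div, div_self hp₀]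
    _ ≤ 1 + f.natDegree * (w - 1) / p := by
        have := sub_nonneg.2 hw
        gcongr
        exact card_filter_dvd_eval_le_natDegree hf hp

theorem rootMean_eulerFactor_pow_le_exp {f : ℤ[X]} (hf : f.IsPrimitive) {p k : ℕ} (hp : p.Prime)
    (hk : k < p) :
    rootMean f (eulerFactor p ^ k) p ≤ exp (4 * f.natDegree * k * ((p : ℝ) ^ 2)⁻¹) := by
  have hp₂ : (2 : ℝ) ≤ p := mod_cast hp.two_le
  have hp₁ : 0 < (p : ℝ) - 1 := by linarith
  have hkp : (k + 1 : ℝ) ≤ p := mod_cast hk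
  have weight_le : eulerFactor p ^ k - 1 ≤ 4 * k / p :=
    calc eulerFactor p ^ k - 1 ≤ exp ((p : ℝ) - 1)⁻¹ ^ k - 1 := by
          gcongr
          · exact eulerFactor_nonneg p
          · exact eulerFactor_le_exp hp.one_lt
      _ = exp (k / ((p : ℝ) - 1)) - 1 := by rw [← exp_nat_mul, div_eq_mul_inv]
      _ ≤ 2 * (k / ((p : ℝ) - 1)) := by
          have hu₀ : 0 ≤ k / ((p : ℝ) - 1) := by positivity
          have hu₁ : k / ((p : ℝ) - 1) ≤ 1 := (div_le_one hp₁).2 (by linarith)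
          have := abs_exp_sub_one_le (abs_le.2 ⟨by linarith, hu₁⟩)
          rw [abs_of_nonneg hu₀] at this
          exact (le_abs_self _).trans this
      _ ≤ 4 * k / p := by
          rw [← mul_div_assoc, div_le_div_iff₀ hp₁ (by linarith)]
          nlinarith [(k.cast_nonneg : (0 : ℝ) ≤ k)]
  calc rootMean f (eulerFactor p ^ k) p
      ≤ 1 + f.natDegree * (eulerFactor p ^ k - 1) / p :=
        rootMean_le_one_add hf (one_le_pow₀ (one_le_eulerFactor hp.one_lt)) hp
    _ ≤ 1 + f.natDegree * (4 * k / p) / p := by gcongr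
    _ = 4 * f.natDegree * k * ((p : ℝ) ^ 2)⁻¹ + 1 := by field_simp; ring
    _ ≤ exp (4 * f.natDegree * k * ((p : ℝ) ^ 2)⁻¹) := add_one_le_exp _

theorem prod_rootMean_small_le (f : ℤ[X]) (k y : ℕ) :
    ∏ p ∈ y.primesLE with p ≤ k, rootMean f (eulerFactor p ^ k) p ≤
      (exp 4 * (2 + log k)) ^ k := by
  have one_le {p : ℕ} (hp : p ∈ k.primesLE) : 1 ≤ eulerFactor p :=
    one_le_eulerFactor (Nat.one_lt_of_mem_primesLE hp)
  have hsub : {p ∈ y.primesLE | p ≤ k} ⊆ k.primesLE := fun p hp ↦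
    Nat.mem_primesLE.2 ⟨(mem_filter.1 hp).2, Nat.prime_of_mem_primesLE (mem_filter.1 hp).1⟩
  calc ∏ p ∈ y.primesLE with p ≤ k, rootMean f (eulerFactor p ^ k) p
      ≤ ∏ p ∈ y.primesLE with p ≤ k, eulerFactor p ^ k :=
        prod_le_prod (fun p _ ↦ rootMean_nonneg f (pow_nonneg (eulerFactor_nonneg p) k) p)
          fun p hp ↦ rootMean_le f (one_le_pow₀ (one_le (hsub hp))) p
    _ = (∏ p ∈ y.primesLE with p ≤ k, eulerFactor p) ^ k := prod_pow _ _ _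
    _ ≤ (∏ p ∈ k.primesLE, eulerFactor p) ^ k := by
        refine pow_le_pow_left₀ (prod_nonneg fun p _ ↦ eulerFactor_nonneg p) ?_ k
        exact prod_le_prod_of_subset_of_one_le hsub (fun p _ ↦ eulerFactor_nonneg p)
          fun p hp _ ↦ one_le hp
    _ ≤ (exp 4 * (2 + log k)) ^ k := by
        exact pow_le_pow_left₀ (prod_nonneg fun p _ ↦ eulerFactor_nonneg p)
          (prod_primesLE_eulerFactor_le k) k

theorem prod_rootMean_large_le {f : ℤ[X]} (hf : f.IsPrimitive) (k y : ℕ) :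
    ∏ p ∈ y.primesLE with ¬p ≤ k, rootMean f (eulerFactor p ^ k) p ≤ exp (8 * f.natDegree) := by
  have hsub : {p ∈ y.primesLE | ¬p ≤ k} ⊆ Ioo k (y + 1) := fun p hp ↦
    mem_Ioo.2 ⟨not_le.1 (mem_filter.1 hp).2,
      Nat.lt_succ_of_le (Nat.le_of_mem_primesLE (mem_filter.1 hp).1)⟩
  calc ∏ p ∈ y.primesLE with ¬p ≤ k, rootMean f (eulerFactor p ^ k) p
      ≤ ∏ p ∈ y.primesLE with ¬p ≤ k, exp (4 * f.natDegree * k * ((p : ℝ) ^ 2)⁻¹) :=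
        prod_le_prod (fun p _ ↦ rootMean_nonneg f (pow_nonneg (eulerFactor_nonneg p) k) p)
          fun p hp ↦ rootMean_eulerFactor_pow_le_exp hf
            (Nat.prime_of_mem_primesLE (mem_filter.1 hp).1) (mem_Ioo.1 (hsub hp)).1
    _ = exp (4 * f.natDegree * k * ∑ p ∈ y.primesLE with ¬p ≤ k, ((p : ℝ) ^ 2)⁻¹) := by
        rw [← exp_sum, mul_sum]
    _ ≤ exp (4 * f.natDegree * k * (2 / (k + 1))) := by
        gcongr
        exact (sum_le_sum_of_subset_of_nonneg hsub fun p _ _ ↦ by positivity).trans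
          (sum_Ioo_inv_sq_le k (y + 1))
    _ ≤ exp (8 * f.natDegree) := by
        refine exp_le_exp.2 ?_
        calc 4 * (f.natDegree : ℝ) * k * (2 / (k + 1)) = 8 * f.natDegree * (k / (k + 1)) := by ring
          _ ≤ 8 * f.natDegree :=
            mul_le_of_le_one_right (by positivity) (div_le_one_of_le₀ (by linarith) (by positivity))

theorem prod_primesLE_rootMean_le {f : ℤ[X]} (hf : f.IsPrimitive) (k y : ℕ) :
    ∏ p ∈ y.primesLE, rootMean f (eulerFactor p ^ k) p ≤
      exp (8 * f.natDegree) * (exp 4 * (2 + log k)) ^ k := by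
  rw [← prod_filter_mul_prod_filter_not _ (· ≤ k), mul_comm]
  exact mul_le_mul (prod_rootMean_large_le hf k y) (prod_rootMean_small_le f k y)
    (prod_nonneg fun p _ ↦ rootMean_nonneg f (pow_nonneg (eulerFactor_nonneg p) k) p)
    (exp_pos _).le

theorem sum_prod_rootWeight_le (f : ℤ[X]) {w : ℕ → ℝ} (hw : ∀ p, 0 ≤ w p) {y N : ℕ}
    (hyN : 4 ^ y ≤ N) :
    ∑ n ∈ Icc 1 N, ∏ p ∈ y.primesLE, rootWeight f (w p) p n ≤
      2 * N * ∏ p ∈ y.primesLE, rootMean f (w p) p := by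
  set P := ∏ p ∈ y.primesLE, p with hP
  have hP₀ : 0 < P := prod_pos fun p hp ↦ (Nat.prime_of_mem_primesLE hp).pos
  have hPN : (N / P + 1) * P ≤ 2 * N := by
    have hle : P ≤ N := (primorial_le_four_pow y).trans hyN
    linarith [N.div_mul_le_self P]
  have hperiodic : ∀ p ∈ y.primesLE, Function.Periodic (rootWeight f (w p) p) p :=
    fun p _ ↦ periodic_rootWeight f (w p) p
  have hcoprime : (y.primesLE : Set ℕ).Pairwise (Function.onFun Nat.Coprime id) :=
    fun p hp q hq ↦ (Nat.coprime_primes (Nat.prime_of_mem_primesLE hp)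
      (Nat.prime_of_mem_primesLE hq)).2
  have sum_eq : ∑ n ∈ range P, ∏ p ∈ y.primesLE, rootWeight f (w p) p n =
      P * ∏ p ∈ y.primesLE, rootMean f (w p) p := by
    rw [hP, Nat.cast_prod, ← prod_mul_distrib]
    refine (sum_range_prod_of_pairwise_coprime_of_periodic _ hcoprime hperiodic).trans
      (prod_congr rfl fun p hp ↦ ?_)
    exact (mul_div_cancel₀ _ (mod_cast (Nat.prime_of_mem_primesLE hp).ne_zero)).symm
  calc ∑ n ∈ Icc 1 N, ∏ p ∈ y.primesLE, rootWeight f (w p) p n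
      ≤ (N / P + 1 : ℕ) * ∑ n ∈ range P, ∏ p ∈ y.primesLE, rootWeight f (w p) p n :=
        sum_Icc_le_of_periodic hP₀ (periodic_prod_of_periodic _ _ hperiodic)
          (fun n ↦ prod_nonneg fun p _ ↦ rootWeight_nonneg f (hw p) p n) N
    _ = ((N / P + 1) * P : ℕ) * ∏ p ∈ y.primesLE, rootMean f (w p) p := by
        rw [sum_eq, Nat.cast_mul, mul_assoc]
    _ ≤ 2 * N * ∏ p ∈ y.primesLE, rootMean f (w p) p := by
        gcongr
        · exact prod_nonneg fun p _ ↦ rootMean_nonneg f (hw p) p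
        · exact_mod_cast hPN

theorem totientRatio_pow_le_exp_mul_prod_rootWeight (f : ℤ[X]) {n c y : ℕ}
    (hn : f.eval (n : ℤ) ≠ 0) (hc : Nat.log 2 (f.eval (n : ℤ)).natAbs ≤ c * (y + 1)) (k : ℕ) :
    totientRatio (f.eval (n : ℤ)).natAbs ^ k ≤
      exp (2 * c) ^ k * ∏ p ∈ y.primesLE, rootWeight f (eulerFactor p ^ k) p n := by
  set m := (f.eval (n : ℤ)).natAbs
  have prod_eq : (∏ p ∈ y.primesLE with p ∣ m, eulerFactor p) ^ k =
      ∏ p ∈ y.primesLE, rootWeight f (eulerFactor p ^ k) p n := by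
    simp only [← prod_pow, prod_filter, ite_pow, one_pow, rootWeight, Int.natCast_dvd, m]
  have hexp : 2 * (Nat.log 2 m : ℝ) / (y + 1) ≤ 2 * c := by
    rw [div_le_iff₀ (by positivity), mul_assoc]
    gcongr
    exact_mod_cast hc
  rw [← prod_eq, ← mul_pow]
  refine pow_le_pow_left₀ (totientRatio_nonneg m)
    ((totientRatio_le_exp_mul_prod (Int.natAbs_ne_zero.2 hn) y).trans ?_) k
  gcongr
  exact prod_nonneg fun p _ ↦ eulerFactor_nonneg p

theorem exists_sum_totientRatio_pow_le_of_isPrimitive {f : ℤ[X]} (hf : f.IsPrimitive)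
    (hf₀ : ∀ n : ℕ, 0 < n → f.eval (n : ℤ) ≠ 0) :
    ∃ A : ℝ, 0 < A ∧ ∀ N k : ℕ, ∑ n ∈ Icc 1 N, totientRatio (f.eval (n : ℤ)).natAbs ^ k ≤
      2 * exp (8 * f.natDegree) * N * (A * (2 + log k)) ^ k := by
  obtain ⟨c, hc⟩ := exists_log_two_natAbs_eval_le f
  refine ⟨exp (2 * c) * exp 4, by positivity, fun N k ↦ ?_⟩
  obtain rfl | hN := eq_or_ne N 0
  · simp
  set y := Nat.log 4 N
  calc ∑ n ∈ Icc 1 N, totientRatio (f.eval (n : ℤ)).natAbs ^ k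
      ≤ ∑ n ∈ Icc 1 N, exp (2 * c) ^ k *
          ∏ p ∈ y.primesLE, rootWeight f (eulerFactor p ^ k) p n := by
        refine sum_le_sum fun n hn ↦ ?_
        obtain ⟨hn₁, hnN⟩ := mem_Icc.1 hn
        exact totientRatio_pow_le_exp_mul_prod_rootWeight f (hf₀ n hn₁) (hc n N hnN) k
    _ = exp (2 * c) ^ k *
          ∑ n ∈ Icc 1 N, ∏ p ∈ y.primesLE, rootWeight f (eulerFactor p ^ k) p n :=
        (mul_sum _ _ _).symm
    _ ≤ exp (2 * c) ^ k * (2 * N * ∏ p ∈ y.primesLE, rootMean f (eulerFactor p ^ k) p) := by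
        gcongr
        exact sum_prod_rootWeight_le f (fun p ↦ pow_nonneg (eulerFactor_nonneg p) k)
          (Nat.pow_log_le_self 4 hN)
    _ ≤ exp (2 * c) ^ k *
          (2 * N * (exp (8 * f.natDegree) * (exp 4 * (2 + log k)) ^ k)) := by
        gcongr
        exact prod_primesLE_rootMean_le hf k y
    _ = 2 * exp (8 * f.natDegree) * N * (exp (2 * c) * exp 4 * (2 + log k)) ^ k := by
        simp only [mul_pow]
        ring

theorem exists_sum_totientRatio_pow_le {f : ℤ[X]} (hf : ∀ n : ℕ, 0 < n → f.eval (n : ℤ) ≠ 0) :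
    ∃ A : ℝ, 0 < A ∧ ∀ N k : ℕ, ∑ n ∈ Icc 1 N, totientRatio (f.eval (n : ℤ)).natAbs ^ k ≤
      2 * exp (8 * f.natDegree) * N * (A * (2 + log k)) ^ k := by
  have eval_eq (n : ℕ) : f.eval (n : ℤ) = f.content * f.primPart.eval (n : ℤ) := by
    conv_lhs => rw [f.eq_C_content_mul_primPart, eval_mul, eval_C]
  obtain ⟨A, hA, hmoment⟩ := exists_sum_totientRatio_pow_le_of_isPrimitive f.isPrimitive_primPart
    fun n hn ↦ right_ne_zero_of_mul (eval_eq n ▸ hf n hn)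
  have hcontent : f.content.natAbs ≠ 0 :=
    Int.natAbs_ne_zero.2 (left_ne_zero_of_mul (eval_eq 1 ▸ hf 1 one_pos))
  set r := totientRatio f.content.natAbs
  refine ⟨r * A, mul_pos (totientRatio_pos hcontent) hA, fun N k ↦ ?_⟩
  calc ∑ n ∈ Icc 1 N, totientRatio (f.eval (n : ℤ)).natAbs ^ k
      ≤ ∑ n ∈ Icc 1 N, r ^ k * totientRatio (f.primPart.eval (n : ℤ)).natAbs ^ k := by
        refine sum_le_sum fun n _ ↦ ?_
        rw [eval_eq, Int.natAbs_mul, ← mul_pow]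
        exact pow_le_pow_left₀ (totientRatio_nonneg _) (totientRatio_mul_le _ _) k
    _ = r ^ k * ∑ n ∈ Icc 1 N, totientRatio (f.primPart.eval (n : ℤ)).natAbs ^ k :=
        (mul_sum _ _ _).symm
    _ ≤ r ^ k * (2 * exp (8 * f.natDegree) * N * (A * (2 + log k)) ^ k) := by
        have := pow_nonneg (totientRatio_nonneg f.content.natAbs) k
        rw [← f.natDegree_primPart]
        gcongr
        exact hmoment N k
    _ = 2 * exp (8 * f.natDegree) * N * (r * A * (2 + log k)) ^ k := by
        rw [mul_assoc r, mul_pow r]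
        ring

section Tail

variable {α : Type*} {s : Finset α} {R : α → ℝ}

theorem card_filter_lt_mul_pow_le_sum_pow (hR : ∀ a ∈ s, 0 ≤ R a) {t : ℝ} (ht : 0 ≤ t) (k : ℕ) :
    #{a ∈ s | t < R a} * t ^ k ≤ ∑ a ∈ s, R a ^ k :=
  calc #{a ∈ s | t < R a} * t ^ k = ∑ a ∈ s with t < R a, t ^ k := by
        rw [sum_const, nsmul_eq_mul]
    _ ≤ ∑ a ∈ s with t < R a, R a ^ k :=
        sum_le_sum fun a ha ↦ pow_le_pow_left₀ ht (mem_filter.1 ha).2.le k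
    _ ≤ ∑ a ∈ s, R a ^ k :=
        sum_le_sum_of_subset_of_nonneg (filter_subset _ s) fun a ha _ ↦ pow_nonneg (hR a ha) k

theorem log_ceil_exp_le {u : ℝ} (hu : 0 ≤ u) : log ⌈exp u⌉₊ ≤ 1 + u := by
  have hceil : (⌈exp u⌉₊ : ℝ) ≤ exp 1 * exp u := by
    have := Nat.ceil_lt_add_one (exp_pos u).le
    nlinarith [one_le_exp hu, add_one_le_exp (1 : ℝ)]
  rw [← exp_add] at hceil
  exact (log_le_iff_le_exp (mod_cast Nat.ceil_pos.2 (exp_pos u))).2 hceil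

-- For `t ≥ 6eA` and `k = ⌈exp (t / 2eA)⌉` one has `A * (2 + log k) ≤ t / e`, so Markov's inequality
-- for the `k`-th moment saves a factor `exp (-k)`.
theorem card_filter_lt_le_of_sum_pow_le (hR : ∀ a ∈ s, 0 ≤ R a) {A M : ℝ} (hA : 0 < A)
    (hmoment : ∀ k : ℕ, ∑ a ∈ s, R a ^ k ≤ M * (A * (2 + log k)) ^ k) (t : ℝ) :
    #{a ∈ s | t < R a} ≤ exp (exp 3) * M * exp (-exp ((2 * exp 1 * A)⁻¹ * t)) := by
  have hM : (#s : ℝ) ≤ M := by simpa using hmoment 0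
  have hM₀ : 0 ≤ M := (#s).cast_nonneg.trans hM
  set u := (2 * exp 1 * A)⁻¹ * t with hu
  have ht : t = 2 * exp 1 * A * u := by rw [hu]; field_simp
  obtain hu₃ | hu₃ := le_total u 3
  · calc (#{a ∈ s | t < R a} : ℝ) ≤ M := le_trans (mod_cast card_filter_le _ _) hM
      _ ≤ M * exp (exp 3 - exp u) :=
        le_mul_of_one_le_right hM₀ (one_le_exp (sub_nonneg.2 (exp_le_exp.2 hu₃)))
      _ = exp (exp 3) * M * exp (-exp u) := by rw [sub_eq_add_neg, exp_add]; ring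
  set k := ⌈exp u⌉₊
  have ht₀ : 0 < t := by rw [ht]; positivity
  have base_le : A * (2 + log k) ≤ exp (-1) * t :=
    calc A * (2 + log k) ≤ A * (2 + (1 + u)) := by
          gcongr
          exact log_ceil_exp_le (by linarith)
      _ ≤ A * (2 * u) := by gcongr; linarith
      _ = exp (-1) * t := by rw [ht, exp_neg]; field_simp
  refine le_of_mul_le_mul_right ?_ (pow_pos ht₀ k)
  calc #{a ∈ s | t < R a} * t ^ k ≤ ∑ a ∈ s, R a ^ k :=
        card_filter_lt_mul_pow_le_sum_pow hR ht₀.le k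
    _ ≤ M * (A * (2 + log k)) ^ k := hmoment k
    _ ≤ M * (exp (-1) * t) ^ k := by
        have := log_natCast_nonneg k
        gcongr
    _ = 1 * M * exp (-k) * t ^ k := by rw [mul_pow, ← exp_nat_mul, mul_neg_one]; ring
    _ ≤ exp (exp 3) * M * exp (-exp u) * t ^ k := by
        gcongr
        · exact one_le_exp (exp_pos 3).le
        · exact Nat.le_ceil _

end Tail

theorem card_totient_ratio_polynomial_gt_le_general {f : ℤ[X]}
    (hf : ∀ n : ℕ, 0 < n → f.eval (n : ℤ) ≠ 0) :
    ∃ c₁ c₂ : ℝ, 0 < c₁ ∧ 0 < c₂ ∧ ∀ x : ℝ, 0 ≤ x → ∀ t : ℝ,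
      (#{n ∈ Icc 1 ⌊x⌋₊ | t < (f.eval ((n : ℕ) : ℤ)).natAbs /
        (Nat.totient (f.eval (n : ℤ)).natAbs : ℝ)} : ℝ) ≤ c₁ * exp (-exp (c₂ * t)) * x := by
  obtain ⟨A, hA, hmoment⟩ := exists_sum_totientRatio_pow_le hf
  set D := 2 * exp (8 * f.natDegree)
  refine ⟨exp (exp 3) * D, (2 * exp 1 * A)⁻¹, by positivity, by positivity, fun x hx t ↦ ?_⟩
  calc _ ≤ exp (exp 3) * (D * ⌊x⌋₊) * exp (-exp ((2 * exp 1 * A)⁻¹ * t)) :=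
        card_filter_lt_le_of_sum_pow_le (R := fun n : ℕ ↦ totientRatio (f.eval (n : ℤ)).natAbs)
          (fun _ _ ↦ totientRatio_nonneg _) hA (hmoment ⌊x⌋₊) t
    _ ≤ exp (exp 3) * (D * x) * exp (-exp ((2 * exp 1 * A)⁻¹ * t)) := by
        gcongr
        exact Nat.floor_le hx
    _ = exp (exp 3) * D * exp (-exp ((2 * exp 1 * A)⁻¹ * t)) * x := by ring

/-- Theorem (Radomskii, Theorem 3, inequality (2)): for a primitive polynomial `f` with
positive leading coefficient mapping positive integers to positive integers,
`#{n ≤ x : f(n)/φ(f(n)) > t} ≤ c₁ exp(-exp(c₂ t)) x`. -/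
theorem card_totient_ratio_polynomial_gt_le (f : Polynomial ℤ)
    (hlead : 0 < f.leadingCoeff) (hcont : f.content = 1)
    (hpos : ∀ n : ℕ, 0 < n → 0 < f.eval (n : ℤ)) :
    ∃ c₁ c₂ : ℝ, 0 < c₁ ∧ 0 < c₂ ∧ ∀ x : ℝ, 1 ≤ x → ∀ t : ℝ, 0 < t →
      (((Finset.Icc 1 ⌊x⌋₊).filter fun n : ℕ =>
          t < ((f.eval (n : ℤ)).toNat : ℝ) / (Nat.totient (f.eval (n : ℤ)).toNat : ℝ)).card : ℝ) ≤
        c₁ * Real.exp (-Real.exp (c₂ * t)) * x := by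
  obtain ⟨c₁, c₂, hc₁, hc₂, hcard⟩ :=
    card_totient_ratio_polynomial_gt_le_general fun n hn ↦ (hpos n hn).ne'
  refine ⟨c₁, c₂, hc₁, hc₂, fun x hx t _ ↦ (hcard x (zero_le_one.trans hx) t).trans' ?_⟩
  refine Nat.cast_le.2 (card_le_card fun n hn ↦ ?_)
  obtain ⟨hn, htn⟩ := mem_filter.1 hn
  have toNat_eq : (f.eval (n : ℤ)).toNat = (f.eval (n : ℤ)).natAbs := by
    have := hpos n (mem_Icc.1 hn).1
    lia
  exact mem_filter.2 ⟨hn, toNat_eq ▸ htn⟩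
end

section
/- Let f(n) = b_d·n^d + ... + b_0 be a polynomial with integer coefficients such that b_d > 0, gcd(b_d, ..., b_0) = 1, and f(p) is a positive integer for every prime p. Then there exists a constant C > 0 depending only on f such that for every real x ≥ 2 and every s ∈ ℕ, Σ_{p ≤ x} (f(p)/φ(f(p)))^s ≤ exp(s·log log(s+2) + C·s) · π(x), where the sum runs over primes p ≤ x and π(x) denotes the number of primes not exceeding x. -/
/-!
Up to a bounded factor, `n / φ(n)` is `exp (∑ 1 / q)` over the primes `q ∣ n`. For `n = f(p)` with
`p ≤ N`, the primes `q ≤ s + 2` contribute at most `log log (s + 2) + O(1)` by Mertens, and those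
beyond `log₁₆ N` contribute `O(1)`, because `n = N ^ O(1)` has only `O(log N)` prime factors. In
between, `exp (s ∑ 1 / q)` is averaged over `p` by expanding it over sets of primes `q > s`. The
product `m` of such a set is at most `√N`, so what is needed is
`#{p ≤ N : m ∣ f(p)} ≤ 230 D ^ ω(m) π(N) / √m`, where `D` bounds the number of roots of `f` modulo a
prime. Losing `√m` against `φ(m)` is harmless, as `∑ 1 / (q √q)` converges, and it allows an
elementary count of the primes in a residue class: `n!` divides `m ^ n ∏_{k ≤ n} (m k + a)`, so the
primes above `n` in the progression divide a quotient of size at most `m ^ (2 n) (n + 1)`.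
-/

open Finset Polynomial
open Real (exp log)
open scoped Nat.Prime

/-! ### Chebyshev and Mertens bounds -/

theorem log_le_two_mul_sqrt_sub_two {x : ℝ} (hx : 0 < x) : log x ≤ 2 * √x - 2 := by
  have h := Real.log_le_sub_one_of_pos (Real.sqrt_pos.2 hx)
  rw [Real.log_sqrt hx.le] at h
  linarith

theorem primeCounting_le_five_mul_div_log {n : ℕ} (hn : 2 ≤ n) : (π n : ℝ) ≤ 5 * (n / log n) := by
  have hn' : (2 : ℝ) ≤ n := by exact_mod_cast hn
  have hlog : 0 < log n := Real.log_pos (by linarith)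
  have hsqrt : √(n : ℝ) ≤ 2 * (n / log n) := by
    rw [mul_div_assoc', le_div_iff₀ hlog]
    nlinarith [log_le_two_mul_sqrt_sub_two (x := n) (by linarith), Real.sqrt_nonneg (n : ℝ),
      Real.mul_self_sqrt (show (0 : ℝ) ≤ n by linarith)]
  have hlog4 : log 4 * n / (log n / 2) = 4 * log 2 * (n / log n) := by
    rw [show (4 : ℝ) = 2 ^ 2 by norm_num, Real.log_pow]
    push_cast
    ring
  have hpi := Chebyshev.pi_le_log4_mul_div (x := (n : ℝ)) (by linarith)
  rw [Nat.floor_natCast, Real.log_sqrt (by linarith), hlog4] at hpi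
  have hpos : 0 < n / log n := by positivity
  nlinarith [Real.log_two_lt_d9]

theorem div_log_le_ten_mul_primeCounting {n : ℕ} (hn : 2 ≤ n) : n / log n ≤ 10 * (π n : ℝ) := by
  have hn' : (2 : ℝ) ≤ n := by exact_mod_cast hn
  have hlog : 0 < log n := Real.log_pos (by linarith)
  have hlog_succ : log (n + 1) ≤ (n + 1) / 4 - 1 + 2 * log 2 := by
    have h := Real.log_le_sub_one_of_pos (x := ((n : ℝ) + 1) / 4) (by positivity)
    rw [Real.log_div (by positivity) (by norm_num), show (4 : ℝ) = 2 ^ 2 by norm_num,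
      Real.log_pow] at h
    push_cast at h
    linarith
  calc (n : ℝ) / log n ≤ 10 * ((n * log 2 - log (n + 1)) / log n) := by
        rw [mul_div_assoc']
        gcongr
        nlinarith [Real.log_two_lt_d9, Real.log_two_gt_d9]
    _ ≤ 10 * (π n : ℝ) := by gcongr; exact Chebyshev.pi_ge n

theorem prod_primesLE_pow_div_dvd_factorial (n : ℕ) :
    ∏ p ∈ n.primesLE, p ^ (n / p) ∣ n.factorial := by
  refine prod_dvd_of_isRelPrime (fun p hp q hq hpq => ?_) fun p hp => ?_
  · rw [Function.onFun, ← Nat.coprime_iff_isRelPrime]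
    exact ((Nat.coprime_primes (Nat.prime_of_mem_primesLE hp)
      (Nat.prime_of_mem_primesLE hq)).2 hpq).pow _ _
  · have hp_prime := Nat.prime_of_mem_primesLE hp
    rw [hp_prime.pow_dvd_factorial_iff (Nat.lt_succ_self _)]
    calc n / p = n / p ^ 1 := by rw [pow_one]
      _ ≤ ∑ i ∈ Ico 1 (Nat.log p n).succ, n / p ^ i :=
        single_le_sum (f := fun i => n / p ^ i) (fun _ _ => Nat.zero_le _) <| by
          have := Nat.log_pos hp_prime.one_lt (Nat.le_of_mem_primesLE hp)
          simp only [mem_Ico]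
          omega

theorem sum_log_div_primesLE_le {n : ℕ} (hn : n ≠ 0) :
    ∑ p ∈ n.primesLE, log p / p ≤ log n + log 4 := by
  have hprime {p : ℕ} (hp : p ∈ n.primesLE) := Nat.prime_of_mem_primesLE hp
  have hfactorial : ∑ p ∈ n.primesLE, (n / p : ℕ) * log p ≤ n * log n := by
    calc ∑ p ∈ n.primesLE, (n / p : ℕ) * log p
        = log (∏ p ∈ n.primesLE, p ^ (n / p) : ℕ) := by
          push_cast
          rw [Real.log_prod fun p hp => pow_ne_zero _ (by exact_mod_cast (hprime hp).ne_zero)]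
          simp only [Real.log_pow]
      _ ≤ log ((n ^ n : ℕ) : ℝ) := by
          have hpos : 0 < ∏ p ∈ n.primesLE, p ^ (n / p) :=
            prod_pos fun p hp => pow_pos (hprime hp).pos _
          gcongr
          exact (Nat.le_of_dvd n.factorial_pos (prod_primesLE_pow_div_dvd_factorial n)).trans
            n.factorial_le_pow
      _ = n * log n := by rw [Nat.cast_pow, Real.log_pow]
  have htheta : ∑ p ∈ n.primesLE, log p ≤ log 4 * n :=
    (Chebyshev.theta_eq_sum_primesLE_log n).symm.trans_le
      (Chebyshev.theta_le_log4_mul_x n.cast_nonneg)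
  have hterm : ∀ p ∈ n.primesLE, n * (log p / p) ≤ (n / p : ℕ) * log p + log p := by
    intro p _
    have hfloor : (n : ℝ) / p ≤ (n / p : ℕ) + 1 := by
      rw [← Nat.floor_div_eq_div (K := ℝ)]
      exact (Nat.lt_floor_add_one _).le
    calc (n : ℝ) * (log p / p) = n / p * log p := by ring
      _ ≤ ((n / p : ℕ) + 1) * log p := by gcongr
      _ = (n / p : ℕ) * log p + log p := by ring
  refine le_of_mul_le_mul_left ?_ (show (0 : ℝ) < n by exact_mod_cast hn.bot_lt)
  calc (n : ℝ) * ∑ p ∈ n.primesLE, log p / p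
      ≤ ∑ p ∈ n.primesLE, (n / p : ℕ) * log p + ∑ p ∈ n.primesLE, log p := by
        rw [mul_sum, ← sum_add_distrib]
        exact sum_le_sum hterm
    _ ≤ n * (log n + log 4) := by linarith

theorem tsum_inv_rpow_le {s : ℝ} (hs : 1 < s) :
    ∑' n : ℕ, ((n : ℝ) ^ s)⁻¹ ≤ 1 + 1 / (s - 1) := by
  rw [(Real.summable_nat_rpow_inv.2 hs).tsum_eq_zero_add]
  have h := ZetaAsymptotics.zeta_limit_aux1 hs
  have hterm : 0 ≤ s * ZetaAsymptotics.termTSum s :=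
    mul_nonneg (by linarith) (tsum_nonneg fun n => ZetaAsymptotics.term_nonneg (n + 1) s)
  rw [Nat.cast_zero, Real.zero_rpow (by linarith), inv_zero, zero_add]
  simp only [Nat.cast_add_one, ← one_div]
  linarith

theorem sum_primesBelow_inv_rpow_le {s : ℝ} (hs : 1 < s) (N : ℕ) :
    ∑ p ∈ N.primesBelow, ((p : ℝ) ^ s)⁻¹ ≤ log (1 + 1 / (s - 1)) := by
  let f : ℕ →* ℝ :=
    { toFun n := ((n : ℝ) ^ s)⁻¹
      map_one' := by simp
      map_mul' a b := by
        rw [Nat.cast_mul, Real.mul_rpow a.cast_nonneg b.cast_nonneg, mul_inv] }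
  have hsum : Summable f := Real.summable_nat_rpow_inv.2 hs
  have hnonneg (n : ℕ) : 0 ≤ f n := inv_nonneg.2 (by positivity)
  have hfactor : ∀ p ∈ N.primesBelow, exp (f p) ≤ (1 - f p)⁻¹ := by
    intro p hp
    have hlt : f p < 1 := inv_lt_one_of_one_lt₀ <|
      Real.one_lt_rpow (by exact_mod_cast (Nat.prime_of_mem_primesBelow hp).one_lt) (by linarith)
    rw [le_inv_comm₀ (Real.exp_pos _) (by linarith), ← Real.exp_neg]
    linarith [Real.add_one_le_exp (-f p)]
  have hpos : 0 < 1 + 1 / (s - 1) := by have := sub_pos.2 hs; positivity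
  rw [Real.le_log_iff_exp_le hpos, Real.exp_sum]
  calc ∏ p ∈ N.primesBelow, exp (f p)
      ≤ ∏ p ∈ N.primesBelow, (1 - f p)⁻¹ := prod_le_prod (fun _ _ => Real.exp_nonneg _) hfactor
    _ = ∑' n : N.smoothNumbers, f n :=
        EulerProduct.prod_primesBelow_geometric_eq_tsum_smoothNumbers hsum N
    _ ≤ ∑' n, f n := hsum.tsum_subtype_le _ _ hnonneg
    _ ≤ 1 + 1 / (s - 1) := tsum_inv_rpow_le hs

/- Rankin's trick: `1 / p` is compared with `1 / p ^ s` for `s = 1 + 1 / log n`. -/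
theorem sum_inv_primesLE_le {n : ℕ} (hn : 3 ≤ n) :
    ∑ p ∈ n.primesLE, (p : ℝ)⁻¹ ≤ log (log n) + 4 := by
  set L := log n with hL
  have hL1 : 1 ≤ L := by
    have hn' : (3 : ℝ) ≤ n := by exact_mod_cast hn
    rw [hL, Real.le_log_iff_exp_le (by linarith)]
    linarith [Real.exp_one_lt_d9]
  have hterm : ∀ p ∈ n.primesLE, (p : ℝ)⁻¹ ≤ ((p : ℝ) ^ (1 + 1 / L))⁻¹ + log p / p / L := by
    intro p hp
    have hp0 : (0 : ℝ) < p := by exact_mod_cast (Nat.prime_of_mem_primesLE hp).pos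
    have hexp : 1 - log p / L ≤ ((p : ℝ) ^ (1 / L))⁻¹ := by
      rw [← Real.rpow_neg hp0.le, Real.rpow_def_of_pos hp0]
      refine le_trans (le_of_eq ?_) (Real.add_one_le_exp _)
      ring
    rw [Real.rpow_add hp0, Real.rpow_one, mul_inv]
    calc (p : ℝ)⁻¹ = (p : ℝ)⁻¹ * (1 - log p / L) + log p / p / L := by ring
      _ ≤ (p : ℝ)⁻¹ * ((p : ℝ) ^ (1 / L))⁻¹ + log p / p / L := by gcongr
  have hzeta : ∑ p ∈ n.primesLE, ((p : ℝ) ^ (1 + 1 / L))⁻¹ ≤ log 2 + log L := by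
    have h := sum_primesBelow_inv_rpow_le (s := 1 + 1 / L) (by simp; linarith) (n + 1)
    rw [add_sub_cancel_left, one_div_one_div] at h
    refine h.trans ?_
    rw [← Real.log_mul (by norm_num) (by linarith)]
    exact Real.log_le_log (by linarith) (by linarith)
  have hlog4 : log 4 = 2 * log 2 := by
    rw [show (4 : ℝ) = 2 ^ 2 by norm_num, Real.log_pow, Nat.cast_two]
  have hmertens : (∑ p ∈ n.primesLE, log p / p) / L ≤ 1 + 2 * log 2 := by
    rw [div_le_iff₀ (by linarith)]
    nlinarith [sum_log_div_primesLE_le (n := n) (by omega), Real.log_two_gt_d9]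
  calc ∑ p ∈ n.primesLE, (p : ℝ)⁻¹
      ≤ ∑ p ∈ n.primesLE, ((p : ℝ) ^ (1 + 1 / L))⁻¹ + (∑ p ∈ n.primesLE, log p / p) / L := by
        rw [sum_div, ← sum_add_distrib]
        exact sum_le_sum hterm
    _ ≤ log L + 4 := by linarith [Real.log_two_lt_d9]

/-! ### Primes in arithmetic progressions -/

theorem dvd_prod_mul_add_of_dvd_factorial {M m n : ℕ} (hM : m.Coprime M) (hn : M ∣ n.factorial)
    (a : ℕ) : M ∣ ∏ k ∈ Icc 1 n, (m * k + a) := by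
  have hM0 : M ≠ 0 := ne_zero_of_dvd_ne_zero n.factorial_ne_zero hn
  obtain ⟨b, -, hb⟩ := Nat.exists_mul_mod_eq_of_coprime a hM hM0
  have hmod : ∏ k ∈ Icc 1 n, (m * k + a) ≡ ∏ k ∈ Icc 1 n, m * (k + b) [MOD M] :=
    Nat.ModEq.prod fun k _ => by
      rw [mul_add]
      exact Nat.ModEq.add_left _ (Nat.ModEq.symm hb)
  have hasc : ∏ k ∈ Icc 1 n, (k + b) = (b + 1).ascFactorial n := by
    rw [Nat.ascFactorial_eq_prod_range, ← Ico_add_one_right_eq_Icc, prod_Ico_eq_prod_range]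
    exact prod_congr rfl fun k _ => by ring
  rw [hmod.dvd_iff dvd_rfl, prod_mul_distrib, hasc]
  exact (hn.trans (Nat.factorial_dvd_ascFactorial _ _)).mul_left _

/- For primes `q ∣ m` the factor `m ^ n` suffices, as `n!` contains `q` at most `n` times; for the
other primes `m` is invertible and the progression may be replaced by consecutive integers. -/
theorem factorial_dvd_pow_mul_prod_mul_add (m a n : ℕ) :
    n.factorial ∣ m ^ n * ∏ k ∈ Icc 1 n, (m * k + a) := by
  refine (Nat.dvd_iff_prime_pow_dvd_dvd _ _).2 fun q i hq hqi => ?_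
  by_cases hqm : q ∣ m
  · have := Fact.mk hq
    have hin : i ≤ n :=
      ((padicValNat_dvd_iff_le n.factorial_ne_zero).1 hqi).trans (padicValNat_factorial_le q n)
    exact ((pow_dvd_pow q hin).trans (pow_dvd_pow_of_dvd hqm n)).mul_right _
  · have hcop : m.Coprime (q ^ i) := (((Nat.Prime.coprime_iff_not_dvd hq).2 hqm).pow_left i).symm
    exact (dvd_prod_mul_add_of_dvd_factorial hcop hqi a).mul_left _

theorem prod_mul_add_le {m a : ℕ} (ha : a ≤ m) (n : ℕ) :
    ∏ k ∈ Icc 1 n, (m * k + a) ≤ m ^ n * (n + 1).factorial := by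
  calc ∏ k ∈ Icc 1 n, (m * k + a) ≤ ∏ k ∈ Icc 1 n, m * (k + 1) :=
        prod_le_prod' fun k _ => by rw [mul_add_one]; gcongr
    _ = m ^ n * (n + 1).factorial := by
        rw [prod_mul_distrib, prod_const, Nat.card_Icc, Nat.add_sub_cancel,
          ← prod_range_add_one_eq_factorial, prod_range_succ', ← Ico_add_one_right_eq_Icc,
          prod_Ico_eq_prod_range]
        simp [add_comm, add_left_comm]

theorem prod_primes_modEq_le {m n a : ℕ} (hm : m ≠ 0) (hmn : m ≤ n) {S : Finset ℕ}
    (hS : ∀ p ∈ S, p.Prime ∧ p ≡ a [MOD m] ∧ n < p ∧ p / m ≤ n) :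
    ∏ p ∈ S, p ≤ m ^ (2 * n) * (n + 1) := by
  have hdecomp : ∀ p ∈ S, m * (p / m) + a % m = p := fun p hp => by
    rw [← (hS p hp).2.1, Nat.div_add_mod]
  have hdvd_prod : ∏ p ∈ S, p ∣ ∏ k ∈ Icc 1 n, (m * k + a % m) := by
    have hinj : Set.InjOn (· / m) (S : Set ℕ) := fun p hp q hq h => by
      rw [← hdecomp p hp, ← hdecomp q hq, show p / m = q / m from h]
    calc ∏ p ∈ S, p = ∏ k ∈ S.image (· / m), (m * k + a % m) := by
          rw [prod_image hinj]
          exact prod_congr rfl fun p hp => (hdecomp p hp).symm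
      _ ∣ ∏ k ∈ Icc 1 n, (m * k + a % m) := by
          refine prod_dvd_prod_of_subset _ _ _ (image_subset_iff.2 fun p hp => ?_)
          obtain ⟨-, -, hnp, hpn⟩ := hS p hp
          exact mem_Icc.2 ⟨Nat.div_pos (hmn.trans hnp.le) (Nat.pos_of_ne_zero hm), hpn⟩
  have hcop : (∏ p ∈ S, p).Coprime n.factorial := Nat.Coprime.prod_left fun p hp => by
    obtain ⟨hp_prime, -, hnp, -⟩ := hS p hp
    exact (Nat.coprime_factorial_iff hp_prime.ne_one).2 (by rwa [hp_prime.minFac_eq])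
  have hpos : 0 < m ^ n * ∏ k ∈ Icc 1 n, (m * k + a % m) :=
    Nat.mul_pos (by positivity) <| prod_pos fun k hk => by
      have := (mem_Icc.1 hk).1
      positivity
  refine Nat.le_of_mul_le_mul_right ?_ n.factorial_pos
  calc (∏ p ∈ S, p) * n.factorial ≤ m ^ n * ∏ k ∈ Icc 1 n, (m * k + a % m) :=
        Nat.le_of_dvd hpos <| hcop.mul_dvd_of_dvd_of_dvd (hdvd_prod.mul_left _)
          (factorial_dvd_pow_mul_prod_mul_add m (a % m) n)
    _ ≤ m ^ n * (m ^ n * (n + 1).factorial) := by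
        gcongr
        exact prod_mul_add_le (Nat.mod_lt _ (Nat.pos_of_ne_zero hm)).le n
    _ = m ^ (2 * n) * (n + 1) * n.factorial := by
        rw [Nat.factorial_succ, two_mul, pow_add]
        ring

theorem le_div_of_sq_le {m N : ℕ} (hm : m ≠ 0) (hmN : m ^ 2 ≤ N) : m ≤ N / m :=
  (Nat.le_div_iff_mul_le (Nat.pos_of_ne_zero hm)).2 (by rwa [← sq])

theorem card_primes_modEq_gt_mul_log_le {N m : ℕ} (hm : m ≠ 0) (hmN : m ^ 2 ≤ N) (a : ℕ) :
    #{p ∈ N.primesLE | p ≡ a [MOD m] ∧ N / m < p} * log N ≤ 4 * (N / m : ℕ) * (1 + log m) := by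
  set n := N / m with hn
  set S := {p ∈ N.primesLE | p ≡ a [MOD m] ∧ n < p}
  have hmpos := Nat.pos_of_ne_zero hm
  have hmn : m ≤ n := le_div_of_sq_le hm hmN
  have hS : ∀ p ∈ S, p.Prime ∧ p ≡ a [MOD m] ∧ n < p ∧ p / m ≤ n := fun p hp => by
    simp only [S, mem_filter, Nat.mem_primesLE] at hp
    exact ⟨hp.1.2, hp.2.1, hp.2.2, Nat.div_le_div_right hp.1.1⟩
  have hlower : #S * (log N / 2) ≤ log (∏ p ∈ S, p : ℕ) := by
    push_cast
    rw [Real.log_prod fun p hp => by exact_mod_cast (hS p hp).1.ne_zero, ← nsmul_eq_mul]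
    refine card_nsmul_le_sum _ _ _ fun p hp => ?_
    have hNp : N ≤ p ^ 2 := by
      have h := Nat.lt_mul_div_succ N hmpos
      nlinarith [(hS p hp).2.2.1]
    have hN0 : 0 < N := hmpos.trans_le ((Nat.le_self_pow two_ne_zero m).trans hmN)
    have hlog : log N ≤ log ((p : ℝ) ^ 2) :=
      Real.log_le_log (by exact_mod_cast hN0) (by exact_mod_cast hNp)
    rw [Real.log_pow] at hlog
    push_cast at hlog
    linarith
  have hupper : log (∏ p ∈ S, p : ℕ) ≤ 2 * n * log m + n := by
    have hprod : 0 < ∏ p ∈ S, p := prod_pos fun p hp => (hS p hp).1.pos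
    calc log (∏ p ∈ S, p : ℕ) ≤ log (m ^ (2 * n) * (n + 1) : ℕ) := by
          gcongr
          exact prod_primes_modEq_le hm hmn hS
      _ = 2 * n * log m + log (n + 1) := by
          push_cast
          rw [Real.log_mul (by positivity) (by positivity), Real.log_pow]
          push_cast
          ring
      _ ≤ 2 * n * log m + n := by
          gcongr
          linarith [Real.log_le_sub_one_of_pos (x := (n : ℝ) + 1) (by positivity)]
  nlinarith [mul_nonneg (Nat.cast_nonneg n : (0 : ℝ) ≤ n) (Real.log_natCast_nonneg m),
    (Nat.cast_nonneg n : (0 : ℝ) ≤ n)]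

theorem primeCounting_div_le {N m : ℕ} (hN : 2 ≤ N) (hm : m ≠ 0) (hmN : m ^ 2 ≤ N) :
    (π (N / m) : ℝ) ≤ 15 * (N / m : ℕ) / log N := by
  set n := N / m
  have hmn : m ≤ n := le_div_of_sq_le hm hmN
  have hn2 : 2 ≤ n := by
    obtain rfl | hm2 : m = 1 ∨ 2 ≤ m := by omega
    · simpa only [n, Nat.div_one] using hN
    · exact hm2.trans hmn
  have hNn : N ≤ n ^ 3 := by
    have h : N < m * (n + 1) := Nat.lt_mul_div_succ N (Nat.pos_of_ne_zero hm)
    nlinarith [Nat.mul_le_mul_right (n + 1) hmn, Nat.mul_le_mul_left n hn2]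
  have hlogN : 0 < log N := Real.log_pos (by exact_mod_cast hN)
  have hlogn : 0 < log n := Real.log_pos (by exact_mod_cast hn2)
  have hlog : log N ≤ 3 * log n := by
    rw [← Nat.cast_ofNat, ← Real.log_pow]
    exact Real.log_le_log (by exact_mod_cast (by omega : 0 < N)) (by exact_mod_cast hNn)
  calc (π n : ℝ) ≤ 5 * (n / log n) := primeCounting_le_five_mul_div_log hn2
    _ = 15 * n / (3 * log n) := by field_simp; norm_num
    _ ≤ 15 * n / log N := by gcongr

/- The cut at `N / m` separates primes dividing `(N / m)!`, which are few, from those controlled by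
`card_primes_modEq_gt_mul_log_le`. -/
theorem card_primes_modEq_le {N m : ℕ} (hN : 2 ≤ N) (hm : m ≠ 0) (hmN : m ^ 2 ≤ N) (a : ℕ) :
    #{p ∈ N.primesLE | p ≡ a [MOD m]} ≤ 230 * (π N / √(m : ℝ)) := by
  set n := N / m
  have hcard : #{p ∈ N.primesLE | p ≡ a [MOD m]} ≤
      #{p ∈ N.primesLE | p ≡ a [MOD m] ∧ n < p} + π n := by
    rw [← Nat.primesLE_card_eq_primeCounting]
    refine (card_le_card fun p hp => ?_).trans (card_union_le _ _)
    simp only [mem_filter, mem_union, Nat.mem_primesLE] at hp ⊢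
    grind
  have hlogN : 0 < log N := Real.log_pos (by exact_mod_cast hN)
  have hlarge : (#{p ∈ N.primesLE | p ≡ a [MOD m] ∧ n < p} : ℝ) ≤ 4 * n * (1 + log m) / log N :=
    (le_div_iff₀ hlogN).2 (card_primes_modEq_gt_mul_log_le hm hmN a)
  have hm1 : (1 : ℝ) ≤ m := by exact_mod_cast Nat.one_le_iff_ne_zero.2 hm
  have hsqrt : 1 ≤ √(m : ℝ) := Real.one_le_sqrt.2 hm1
  calc (#{p ∈ N.primesLE | p ≡ a [MOD m]} : ℝ)
      ≤ #{p ∈ N.primesLE | p ≡ a [MOD m] ∧ n < p} + π n := by exact_mod_cast hcard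
    _ ≤ (4 * (1 + log m) + 15) * n / log N := by
        refine (add_le_add hlarge (primeCounting_div_le hN hm hmN)).trans_eq ?_
        ring
    _ ≤ 23 * √(m : ℝ) * (N / m) / log N := by
        gcongr
        · linarith [log_le_two_mul_sqrt_sub_two (x := m) (by linarith)]
        · exact Nat.cast_div_le
    _ = 23 * (N / log N) / √(m : ℝ) := by
        field_simp
        exact Real.sq_sqrt m.cast_nonneg
    _ ≤ 23 * (10 * π N) / √(m : ℝ) := by
        gcongr
        exact div_log_le_ten_mul_primeCounting hN
    _ = 230 * (π N / √(m : ℝ)) := by ring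

/-! ### Roots of a polynomial modulo squarefree numbers -/

theorem dvd_eval_iff_of_modEq (f : ℤ[X]) {m a b : ℕ} (h : a ≡ b [MOD m]) :
    (m : ℤ) ∣ f.eval (a : ℤ) ↔ (m : ℤ) ∣ f.eval (b : ℤ) :=
  dvd_iff_dvd_of_dvd_sub <|
    (Nat.modEq_iff_dvd.1 h.symm).trans (sub_dvd_eval_sub (a : ℤ) (b : ℤ) f)

/-- The roots of the integer polynomial `f` modulo `m`, represented by their residues in
`{0, …, m - 1}`. -/
noncomputable def rootsMod (f : ℤ[X]) (m : ℕ) : Finset ℕ :=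
  {a ∈ range m | (m : ℤ) ∣ f.eval (a : ℤ)}

theorem mem_rootsMod {f : ℤ[X]} {m a : ℕ} :
    a ∈ rootsMod f m ↔ a < m ∧ (m : ℤ) ∣ f.eval (a : ℤ) := by
  rw [rootsMod, mem_filter, mem_range]

theorem mod_mem_rootsMod {f : ℤ[X]} {m a : ℕ} (hm : m ≠ 0) (h : (m : ℤ) ∣ f.eval (a : ℤ)) :
    a % m ∈ rootsMod f m :=
  mem_rootsMod.2 ⟨Nat.mod_lt _ (Nat.pos_of_ne_zero hm),
    (dvd_eval_iff_of_modEq f (Nat.mod_modEq a m)).2 h⟩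

theorem card_rootsMod_le (f : ℤ[X]) (m : ℕ) : #(rootsMod f m) ≤ m :=
  (card_filter_le _ _).trans_eq (card_range m)

theorem card_rootsMod_le_natDegree {f : ℤ[X]} {q : ℕ} (hq : q.Prime) (h : ¬(q : ℤ) ∣ f.content) :
    #(rootsMod f q) ≤ f.natDegree := by
  have := Fact.mk hq
  set g := f.map (Int.castRingHom (ZMod q)) with hg
  have hg0 : g ≠ 0 := by
    contrapose! h
    rw [dvd_content_iff_C_dvd, C_dvd_iff_dvd_coeff]
    intro i
    rw [← ZMod.intCast_zmod_eq_zero_iff_dvd, ← eq_intCast (Int.castRingHom (ZMod q)), ← coeff_map,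
      ← hg, h, coeff_zero]
  calc #(rootsMod f q) ≤ #g.roots.toFinset := by
        refine card_le_card_of_injOn (fun a : ℕ => (a : ZMod q)) (fun a ha => ?_)
          fun a ha b hb hab => ?_
        · rw [mem_coe, Multiset.mem_toFinset, mem_roots hg0, IsRoot.def, hg]
          simp only [← Int.cast_natCast (R := ZMod q)]
          rw [eval_intCast_map, eq_intCast, ZMod.intCast_zmod_eq_zero_iff_dvd]
          exact (mem_rootsMod.1 ha).2
        · exact ((ZMod.natCast_eq_natCast_iff _ _ _).1 hab).eq_of_lt_of_lt (mem_rootsMod.1 ha).1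
            (mem_rootsMod.1 hb).1
    _ ≤ g.roots.card := Multiset.toFinset_card_le _
    _ ≤ f.natDegree := (card_roots' g).trans natDegree_map_le

theorem card_rootsMod_prime_le {f : ℤ[X]} (hf : f ≠ 0) {q : ℕ} (hq : q.Prime) :
    #(rootsMod f q) ≤ max f.natDegree f.content.natAbs := by
  by_cases h : (q : ℤ) ∣ f.content
  · refine le_max_of_le_right ((card_rootsMod_le f q).trans ?_)
    exact Nat.le_of_dvd (Int.natAbs_pos.2 (content_eq_zero_iff.not.2 hf)) (Int.natCast_dvd.1 h)
  · exact le_max_of_le_left (card_rootsMod_le_natDegree hq h)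

theorem card_rootsMod_mul_le (f : ℤ[X]) {m n : ℕ} (hm : m ≠ 0) (hn : n ≠ 0) (h : m.Coprime n) :
    #(rootsMod f (m * n)) ≤ #(rootsMod f m) * #(rootsMod f n) := by
  rw [← card_product]
  refine card_le_card_of_injOn (fun a => (a % m, a % n)) (fun a ha => ?_) fun a ha b hb hab => ?_
  · have hdvd := (mem_rootsMod.1 ha).2
    push_cast at hdvd
    exact mem_product.2 ⟨mod_mem_rootsMod hm (dvd_of_mul_right_dvd hdvd),
      mod_mem_rootsMod hn (dvd_of_mul_left_dvd hdvd)⟩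
  · rw [Prod.mk.injEq] at hab
    exact ((Nat.modEq_and_modEq_iff_modEq_mul h).1 hab).eq_of_lt_of_lt (mem_rootsMod.1 ha).1
      (mem_rootsMod.1 hb).1

theorem card_rootsMod_prod_le {f : ℤ[X]} (hf : f ≠ 0) {T : Finset ℕ} (hT : ∀ q ∈ T, q.Prime) :
    #(rootsMod f (∏ q ∈ T, q)) ≤ max f.natDegree f.content.natAbs ^ #T := by
  induction T using Finset.induction_on with
  | empty => simpa only [prod_empty, card_empty, pow_zero] using card_rootsMod_le f 1
  | insert q T hqT ih =>
    obtain ⟨hq, hT⟩ := forall_mem_insert .. |>.1 hT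
    have hcop : q.Coprime (∏ r ∈ T, r) := Nat.Coprime.prod_right fun r hr =>
      (Nat.coprime_primes hq (hT r hr)).2 fun h => hqT (h ▸ hr)
    rw [prod_insert hqT, card_insert_of_notMem hqT, pow_succ']
    exact (card_rootsMod_mul_le f hq.ne_zero (prod_ne_zero_iff.2 fun r hr => (hT r hr).ne_zero)
      hcop).trans (Nat.mul_le_mul (card_rootsMod_prime_le hf hq) (ih hT))

theorem card_primes_dvd_eval_le (f : ℤ[X]) {N m : ℕ} (hN : 2 ≤ N) (hm : m ≠ 0) (hmN : m ^ 2 ≤ N) :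
    (#{p ∈ N.primesLE | (m : ℤ) ∣ f.eval ((p : ℕ) : ℤ)} : ℝ) ≤
      #(rootsMod f m) * (230 * (π N / √(m : ℝ))) := by
  have hcover : {p ∈ N.primesLE | (m : ℤ) ∣ f.eval ((p : ℕ) : ℤ)} ⊆
      (rootsMod f m).biUnion fun a => {p ∈ N.primesLE | p ≡ a [MOD m]} := fun p hp => by
    obtain ⟨hp, hdvd⟩ := mem_filter.1 hp
    exact mem_biUnion.2 ⟨p % m, mod_mem_rootsMod hm hdvd,
      mem_filter.2 ⟨hp, (Nat.mod_modEq p m).symm⟩⟩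
  calc (#{p ∈ N.primesLE | (m : ℤ) ∣ f.eval ((p : ℕ) : ℤ)} : ℝ)
      ≤ ∑ a ∈ rootsMod f m, (#{p ∈ N.primesLE | p ≡ a [MOD m]} : ℝ) := by
        exact_mod_cast (card_le_card hcover).trans card_biUnion_le
    _ ≤ #(rootsMod f m) • (230 * (π N / √(m : ℝ))) :=
        sum_le_card_nsmul _ _ _ fun a _ => card_primes_modEq_le hN hm hmN a
    _ = #(rootsMod f m) * (230 * (π N / √(m : ℝ))) := nsmul_eq_mul _ _

theorem card_primes_forall_dvd_eval_le {f : ℤ[X]} (hf : f ≠ 0) {N : ℕ} (hN : 2 ≤ N) {T : Finset ℕ}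
    (hT : ∀ q ∈ T, q.Prime) (hTN : (∏ q ∈ T, q) ^ 2 ≤ N) :
    (#{p ∈ N.primesLE | ∀ q ∈ T, (q : ℤ) ∣ f.eval ((p : ℕ) : ℤ)} : ℝ) ≤
      230 * π N * ∏ q ∈ T, (max f.natDegree f.content.natAbs : ℕ) / √(q : ℝ) := by
  set m := ∏ q ∈ T, q with hm
  have hsub : {p ∈ N.primesLE | ∀ q ∈ T, (q : ℤ) ∣ f.eval ((p : ℕ) : ℤ)} ⊆
      {p ∈ N.primesLE | (m : ℤ) ∣ f.eval ((p : ℕ) : ℤ)} := fun p hp => by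
    obtain ⟨hp, hdvd⟩ := mem_filter.1 hp
    refine mem_filter.2 ⟨hp, ?_⟩
    rw [hm, Nat.cast_prod]
    exact prod_dvd_of_coprime (fun q hq r hr hqr => Nat.isCoprime_iff_coprime.2
      ((Nat.coprime_primes (hT q hq) (hT r hr)).2 hqr)) hdvd
  have hsqrt : √(m : ℝ) = ∏ q ∈ T, √(q : ℝ) := by
    rw [hm, Nat.cast_prod, Real.sqrt_prod _ fun q _ => Nat.cast_nonneg q]
  calc (#{p ∈ N.primesLE | ∀ q ∈ T, (q : ℤ) ∣ f.eval ((p : ℕ) : ℤ)} : ℝ)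
      ≤ #{p ∈ N.primesLE | (m : ℤ) ∣ f.eval ((p : ℕ) : ℤ)} := by exact_mod_cast card_le_card hsub
    _ ≤ #(rootsMod f m) * (230 * (π N / √(m : ℝ))) :=
        card_primes_dvd_eval_le f hN (prod_ne_zero_iff.2 fun q hq => (hT q hq).ne_zero) hTN
    _ ≤ (max f.natDegree f.content.natAbs ^ #T : ℕ) * (230 * (π N / √(m : ℝ))) := by
        gcongr
        exact card_rootsMod_prod_le hf hT
    _ = 230 * π N * ∏ q ∈ T, (max f.natDegree f.content.natAbs : ℕ) / √(q : ℝ) := by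
        rw [prod_div_distrib, prod_const, hsqrt, Nat.cast_pow]
        ring

/-! ### An exponential moment bound -/

theorem exp_le_one_add_two_mul {t : ℝ} (ht₀ : 0 ≤ t) (ht₁ : t ≤ 1) : exp t ≤ 1 + 2 * t := by
  have h := Real.abs_exp_sub_one_sub_id_le ((abs_of_nonneg ht₀).trans_le ht₁)
  nlinarith [(abs_le.1 h).2]

theorem exp_sum_filter_le_sum_powerset {ι : Type*} {Q : Finset ι} (R : ι → Prop) [DecidablePred R]
    {c : ι → ℝ} (hc₀ : ∀ q ∈ Q, 0 ≤ c q) (hc₁ : ∀ q ∈ Q, c q ≤ 1) :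
    exp (∑ q ∈ Q with R q, c q) ≤ ∑ T ∈ Q.powerset with ∀ q ∈ T, R q, ∏ q ∈ T, 2 * c q := by
  calc exp (∑ q ∈ Q with R q, c q) = ∏ q ∈ Q with R q, exp (c q) := Real.exp_sum _ _
    _ ≤ ∏ q ∈ Q with R q, (1 + 2 * c q) :=
        prod_le_prod (fun _ _ => Real.exp_nonneg _) fun q hq =>
          have hqQ := (mem_filter.1 hq).1
          exp_le_one_add_two_mul (hc₀ q hqQ) (hc₁ q hqQ)
    _ = ∑ T ∈ Q.powerset with ∀ q ∈ T, R q, ∏ q ∈ T, 2 * c q := by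
        rw [prod_one_add]
        refine sum_congr ?_ fun _ _ => rfl
        ext T
        simp only [mem_powerset, mem_filter, subset_iff]
        grind

theorem sum_exp_sum_filter_le {α ι : Type*} {P : Finset α} {Q : Finset ι} {R : α → ι → Prop}
    [∀ a, DecidablePred (R a)] {A : ℝ} {c w : ι → ℝ} (hc₀ : ∀ q ∈ Q, 0 ≤ c q)
    (hc₁ : ∀ q ∈ Q, c q ≤ 1) (hw : ∀ q ∈ Q, 0 ≤ w q)
    (hcard : ∀ T ⊆ Q, (#{p ∈ P | ∀ q ∈ T, R p q} : ℝ) ≤ A * ∏ q ∈ T, w q) :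
    ∑ p ∈ P, exp (∑ q ∈ Q with R p q, c q) ≤ A * exp (2 * ∑ q ∈ Q, c q * w q) := by
  have hA : 0 ≤ A := by
    simpa only [prod_empty, mul_one] using (Nat.cast_nonneg _).trans (hcard ∅ (empty_subset Q))
  calc ∑ p ∈ P, exp (∑ q ∈ Q with R p q, c q)
      ≤ ∑ p ∈ P, ∑ T ∈ Q.powerset with ∀ q ∈ T, R p q, ∏ q ∈ T, 2 * c q :=
        sum_le_sum fun p _ => exp_sum_filter_le_sum_powerset (R p) hc₀ hc₁
    _ = ∑ T ∈ Q.powerset, #{p ∈ P | ∀ q ∈ T, R p q} * ∏ q ∈ T, 2 * c q := by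
        simp only [sum_filter]
        rw [sum_comm]
        simp only [← sum_filter, sum_const, nsmul_eq_mul]
    _ ≤ ∑ T ∈ Q.powerset, (A * ∏ q ∈ T, w q) * ∏ q ∈ T, 2 * c q := by
        refine sum_le_sum fun T hT => ?_
        have hTQ := mem_powerset.1 hT
        gcongr
        · exact prod_nonneg fun q hq => mul_nonneg two_pos.le (hc₀ q (hTQ hq))
        · exact hcard T hTQ
    _ = A * ∏ q ∈ Q, (1 + 2 * (c q * w q)) := by
        rw [prod_one_add, mul_sum]
        refine sum_congr rfl fun T _ => ?_
        rw [mul_assoc, ← prod_mul_distrib]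
        congr 1
        exact prod_congr rfl fun q _ => by ring
    _ ≤ A * exp (2 * ∑ q ∈ Q, c q * w q) := by
        rw [mul_sum, Real.exp_sum]
        gcongr with q
        · intro q hq
          have := mul_nonneg (hc₀ q hq) (hw q hq)
          positivity
        · rw [add_comm]
          exact Real.add_one_le_exp _

/-! ### Prime factors and the ratio `n / φ(n)` -/

theorem inv_one_sub_inv_le_exp {x : ℝ} (hx : 2 ≤ x) :
    (1 - x⁻¹)⁻¹ ≤ exp (x⁻¹ + 2 * (x ^ 2)⁻¹) := by
  have hx1 : 0 < x - 1 := by linarith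
  have hx0 : 0 < x := by linarith
  calc (1 - x⁻¹)⁻¹ = (x - 1)⁻¹ + 1 := by field_simp; ring
    _ ≤ exp (x - 1)⁻¹ := Real.add_one_le_exp _
    _ ≤ exp (x⁻¹ + 2 * (x ^ 2)⁻¹) := by
        rw [Real.exp_le_exp]
        field_simp
        nlinarith

theorem sum_inv_sq_primeFactors_le_one (n : ℕ) : ∑ q ∈ n.primeFactors, ((q : ℝ) ^ 2)⁻¹ ≤ 1 := by
  obtain rfl | hn := eq_or_ne n 0
  · simp
  have hsub : n.primeFactors ⊆ Ioc 1 n := fun q hq =>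
    mem_Ioc.2 ⟨(Nat.prime_of_mem_primeFactors hq).one_lt, Nat.le_of_mem_primeFactors hq⟩
  calc ∑ q ∈ n.primeFactors, ((q : ℝ) ^ 2)⁻¹ ≤ ∑ q ∈ Ioc 1 n, ((q : ℝ) ^ 2)⁻¹ :=
        sum_le_sum_of_subset_of_nonneg hsub fun _ _ _ => by positivity
    _ ≤ ((1 : ℕ) : ℝ)⁻¹ - (n : ℝ)⁻¹ :=
        sum_Ioc_inv_sq_le_sub one_ne_zero (Nat.one_le_iff_ne_zero.2 hn)
    _ ≤ 1 := by simp

theorem div_totient_le_exp (n : ℕ) :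
    (n : ℝ) / Nat.totient n ≤ exp (∑ q ∈ n.primeFactors, (q : ℝ)⁻¹ + 2) := by
  obtain rfl | hn := eq_or_ne n 0
  · rw [Nat.cast_zero, zero_div]
    positivity
  have htotient : (Nat.totient n : ℝ) = n * ∏ q ∈ n.primeFactors, (1 - (q : ℝ)⁻¹) := by
    have h := congrArg ((↑) : ℚ → ℝ) (Nat.totient_eq_mul_prod_factors n)
    push_cast at h
    exact h
  calc (n : ℝ) / Nat.totient n = ∏ q ∈ n.primeFactors, (1 - (q : ℝ)⁻¹)⁻¹ := by
        rw [htotient, div_mul_cancel_left₀ (Nat.cast_ne_zero.2 hn), prod_inv_distrib]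
    _ ≤ ∏ q ∈ n.primeFactors, exp ((q : ℝ)⁻¹ + 2 * ((q : ℝ) ^ 2)⁻¹) := by
        have htwo : ∀ q ∈ n.primeFactors, (2 : ℝ) ≤ q := fun q hq => by
          exact_mod_cast (Nat.prime_of_mem_primeFactors hq).two_le
        refine prod_le_prod (fun q hq => inv_nonneg.2 (sub_nonneg.2 ?_)) fun q hq =>
          inv_one_sub_inv_le_exp (htwo q hq)
        exact inv_le_one_of_one_le₀ (one_le_two.trans (htwo q hq))
    _ ≤ exp (∑ q ∈ n.primeFactors, (q : ℝ)⁻¹ + 2) := by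
        rw [← Real.exp_sum, Real.exp_le_exp, sum_add_distrib, ← mul_sum]
        linarith [sum_inv_sq_primeFactors_le_one n]

theorem card_primeFactors_mul_log_two_le (n : ℕ) : #n.primeFactors * log 2 ≤ log n := by
  obtain rfl | hn := eq_or_ne n 0
  · simp
  rw [← Real.log_pow]
  refine Real.log_le_log (by positivity) ?_
  exact_mod_cast (pow_card_le_prod _ _ _ fun q hq =>
    (Nat.prime_of_mem_primeFactors hq).two_le).trans
      (Nat.le_of_dvd (Nat.pos_of_ne_zero hn) (Nat.prod_primeFactors_dvd n))

theorem sum_inv_primeFactors_gt_log_le {n N k : ℕ} (hN : 2 ≤ N) (hn : n ≤ N ^ k) :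
    ∑ q ∈ n.primeFactors with Nat.log 16 N < q, (q : ℝ)⁻¹ ≤ 4 * k := by
  have hlogN : 0 < log N := Real.log_pos (by exact_mod_cast hN)
  have hinv : ∀ q ∈ n.primeFactors.filter (Nat.log 16 N < ·), (q : ℝ)⁻¹ ≤ 4 * log 2 / log N := by
    intro q hq
    obtain ⟨hq, hlt⟩ := mem_filter.1 hq
    have hNq : N ≤ 2 ^ (4 * q) := by
      rw [pow_mul]
      exact ((Nat.lt_pow_succ_log_self (by norm_num) N).trans_le
        (Nat.pow_le_pow_right (by norm_num) hlt)).le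
    have hlog : log N ≤ (4 * q : ℕ) * log 2 := by
      rw [← Real.log_pow]
      exact Real.log_le_log (by exact_mod_cast (by omega : 0 < N)) (by exact_mod_cast hNq)
    have hq0 : (0 : ℝ) < q := by exact_mod_cast (Nat.prime_of_mem_primeFactors hq).pos
    rw [inv_le_iff_one_le_mul₀ hq0, div_mul_eq_mul_div, one_le_div hlogN]
    push_cast at hlog
    linarith
  have hcard : #n.primeFactors * log 2 ≤ k * log N := by
    refine (card_primeFactors_mul_log_two_le n).trans ?_
    rw [← Real.log_pow]
    obtain rfl | hn0 := eq_or_ne n 0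
    · rw [Nat.cast_zero, Real.log_zero, Real.log_pow]
      positivity
    · exact Real.log_le_log (by exact_mod_cast Nat.pos_of_ne_zero hn0) (by exact_mod_cast hn)
  calc ∑ q ∈ n.primeFactors with Nat.log 16 N < q, (q : ℝ)⁻¹
      ≤ #{q ∈ n.primeFactors | Nat.log 16 N < q} • (4 * log 2 / log N) :=
        sum_le_card_nsmul _ _ _ hinv
    _ ≤ #n.primeFactors * (4 * log 2 / log N) := by
        rw [nsmul_eq_mul]
        gcongr
        exact filter_subset _ _
    _ = 4 * (#n.primeFactors * log 2) / log N := by ring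
    _ ≤ 4 * (k * log N) / log N := by gcongr
    _ = 4 * k := by field_simp

/-! ### Splitting the prime factors of a polynomial value -/

theorem natAbs_eval_le_pow (f : ℤ[X]) {N : ℕ} (hN : 2 ≤ N) {z : ℤ} (hz : z.natAbs ≤ N) :
    (f.eval z).natAbs ≤ N ^ (∑ i ∈ f.support, (f.coeff i).natAbs + f.natDegree) := by
  set A := ∑ i ∈ f.support, (f.coeff i).natAbs
  have hA : A ≤ N ^ A := (Nat.lt_pow_self (by omega)).le
  calc (f.eval z).natAbs ≤ ∑ i ∈ f.support, (f.coeff i * z ^ i).natAbs := by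
        rw [eval_eq_sum, sum_def]
        exact Int.natAbs_sum_le _ _
    _ ≤ ∑ i ∈ f.support, (f.coeff i).natAbs * N ^ f.natDegree := by
        refine sum_le_sum fun i hi => ?_
        rw [Int.natAbs_mul, Int.natAbs_pow]
        exact Nat.mul_le_mul_left _ ((Nat.pow_le_pow_left hz i).trans
          (Nat.pow_le_pow_right (by omega) (le_natDegree_of_mem_supp i hi)))
    _ ≤ N ^ (A + f.natDegree) := by
        rw [← sum_mul, pow_add]
        gcongr

/-- The primes in the range `(s + 2, log₁₆ N]`. Those up to `s + 2` account for the main term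
`log log (s + 2)`, and a number of size `N ^ O(1)` has too few prime factors for those beyond
`log₁₆ N` to matter. The base `16` ensures that a product of distinct primes in this range is at
most `√N`. -/
def middlePrimes (s N : ℕ) : Finset ℕ := {q ∈ (Nat.log 16 N).primesLE | s + 2 < q}

theorem mem_middlePrimes {s N q : ℕ} :
    q ∈ middlePrimes s N ↔ (q ≤ Nat.log 16 N ∧ q.Prime) ∧ s + 2 < q := by
  rw [middlePrimes, mem_filter, Nat.mem_primesLE]

theorem prod_sq_le_of_subset_middlePrimes {s N : ℕ} (hN : N ≠ 0) {T : Finset ℕ}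
    (hT : T ⊆ middlePrimes s N) : (∏ q ∈ T, q) ^ 2 ≤ N := by
  have hprod : ∏ q ∈ T, q ≤ 4 ^ Nat.log 16 N :=
    calc ∏ q ∈ T, q ≤ ∏ q ∈ (Nat.log 16 N).primesLE, q :=
          prod_le_prod_of_subset_of_one_le' (hT.trans (filter_subset _ _)) fun q hq _ =>
            (Nat.prime_of_mem_primesLE hq).one_le
      _ ≤ 4 ^ Nat.log 16 N := primorial_le_four_pow _
  calc (∏ q ∈ T, q) ^ 2 ≤ (4 ^ Nat.log 16 N) ^ 2 := by gcongr
    _ = 16 ^ Nat.log 16 N := by rw [pow_right_comm]; norm_num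
    _ ≤ N := Nat.pow_log_le_self 16 hN

theorem sum_exp_sum_middlePrimes_le {f : ℤ[X]} (hf : f ≠ 0) {N : ℕ} (hN : 2 ≤ N) (s : ℕ) :
    ∑ p ∈ N.primesLE,
        exp (∑ q ∈ middlePrimes s N with q ∣ (f.eval (p : ℤ)).natAbs, (s / q : ℝ)) ≤
      230 * π N * exp (2 * (s * ((max f.natDegree f.content.natAbs : ℕ) *
        ∑' n : ℕ, ((n : ℝ) ^ (3 / 2 : ℝ))⁻¹))) := by
  set D := max f.natDegree f.content.natAbs
  have hsum : ∑ q ∈ middlePrimes s N, (s / q : ℝ) * (D / √(q : ℝ)) ≤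
      s * (D * ∑' n : ℕ, ((n : ℝ) ^ (3 / 2 : ℝ))⁻¹) := by
    calc ∑ q ∈ middlePrimes s N, (s / q : ℝ) * (D / √(q : ℝ))
        = s * (D * ∑ q ∈ middlePrimes s N, ((q : ℝ) ^ (3 / 2 : ℝ))⁻¹) := by
          rw [mul_sum, mul_sum]
          refine sum_congr rfl fun q hq => ?_
          have hq0 : (0 : ℝ) < q := by exact_mod_cast (mem_middlePrimes.1 hq).1.2.pos
          rw [show (3 / 2 : ℝ) = 1 + 1 / 2 by norm_num, Real.rpow_add hq0, Real.rpow_one,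
            ← Real.sqrt_eq_rpow]
          field_simp
      _ ≤ s * (D * ∑' n : ℕ, ((n : ℝ) ^ (3 / 2 : ℝ))⁻¹) := by
          gcongr
          exact (Real.summable_nat_rpow_inv.2 (by norm_num)).sum_le_tsum _ fun _ _ => by positivity
  calc ∑ p ∈ N.primesLE,
        exp (∑ q ∈ middlePrimes s N with q ∣ (f.eval (p : ℤ)).natAbs, (s / q : ℝ))
      ≤ 230 * π N * exp (2 * ∑ q ∈ middlePrimes s N, (s / q : ℝ) * (D / √(q : ℝ))) := by
        refine sum_exp_sum_filter_le (fun q _ => by positivity) (fun q hq => ?_)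
          (fun q _ => by positivity) fun T hT => ?_
        · have hsq : (s : ℝ) ≤ q := by
            have := (mem_middlePrimes.1 hq).2
            exact_mod_cast (by omega : s ≤ q)
          exact div_le_one_of_le₀ hsq q.cast_nonneg
        · simp only [← Int.natCast_dvd]
          exact card_primes_forall_dvd_eval_le hf hN
            (fun q hq => (mem_middlePrimes.1 (hT hq)).1.2)
            (prod_sq_le_of_subset_middlePrimes (by omega) hT)
    _ ≤ 230 * π N * exp (2 * (s * (D * ∑' n : ℕ, ((n : ℝ) ^ (3 / 2 : ℝ))⁻¹))) := by gcongr

theorem sum_union_le_add {ι M : Type*} [DecidableEq ι] [AddCommMonoid M] [PartialOrder M]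
    [IsOrderedAddMonoid M] {f : ι → M} {s t : Finset ι} (hf : ∀ i ∈ s ∩ t, 0 ≤ f i) :
    ∑ i ∈ s ∪ t, f i ≤ ∑ i ∈ s, f i + ∑ i ∈ t, f i := by
  rw [← sum_union_inter]
  exact le_add_of_nonneg_right (sum_nonneg hf)

theorem sum_inv_primeFactors_le {n N k s : ℕ} (hN : 2 ≤ N) (hn : n ≤ N ^ k) (hs : 0 < s) :
    ∑ q ∈ n.primeFactors, (q : ℝ)⁻¹ ≤
      log (log (s + 2)) + (4 * k + 4) + ∑ q ∈ middlePrimes s N with q ∣ n, (q : ℝ)⁻¹ := by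
  set large := {q ∈ n.primeFactors | Nat.log 16 N < q}
  set middle := {q ∈ middlePrimes s N | q ∣ n}
  have hcover : n.primeFactors ⊆ (s + 2).primesLE ∪ (large ∪ middle) := fun q hq => by
    have hprime := Nat.prime_of_mem_primeFactors hq
    have hdvd := Nat.dvd_of_mem_primeFactors hq
    simp only [large, middle, mem_union, mem_filter, Nat.mem_primesLE, mem_middlePrimes]
    grind
  have hnonneg (q : ℕ) : 0 ≤ (q : ℝ)⁻¹ := by positivity
  have hsmall := sum_inv_primesLE_le (n := s + 2) (by omega)
  push_cast at hsmall
  calc ∑ q ∈ n.primeFactors, (q : ℝ)⁻¹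
      ≤ ∑ q ∈ (s + 2).primesLE ∪ (large ∪ middle), (q : ℝ)⁻¹ :=
        sum_le_sum_of_subset_of_nonneg hcover fun q _ _ => hnonneg q
    _ ≤ ∑ q ∈ (s + 2).primesLE, (q : ℝ)⁻¹ + (∑ q ∈ large, (q : ℝ)⁻¹ + ∑ q ∈ middle, (q : ℝ)⁻¹) := by
        grw [sum_union_le_add fun q _ => hnonneg q, sum_union_le_add fun q _ => hnonneg q]
    _ ≤ log (log (s + 2)) + (4 * k + 4) + ∑ q ∈ middle, (q : ℝ)⁻¹ := by
        linarith [sum_inv_primeFactors_gt_log_le hN hn]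

theorem div_totient_pow_le {n N k s : ℕ} (hN : 2 ≤ N) (hn : n ≤ N ^ k) (hs : 0 < s) :
    ((n : ℝ) / Nat.totient n) ^ s ≤ exp (s * log (log (s + 2)) + (4 * k + 6) * s) *
      exp (∑ q ∈ middlePrimes s N with q ∣ n, (s / q : ℝ)) := by
  have hbound : (n : ℝ) / Nat.totient n ≤
      exp (log (log (s + 2)) + (4 * k + 6) + ∑ q ∈ middlePrimes s N with q ∣ n, (q : ℝ)⁻¹) :=
    (div_totient_le_exp n).trans <| Real.exp_le_exp.2 <| by
      linarith [sum_inv_primeFactors_le hN hn hs]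
  refine (pow_le_pow_left₀ (by positivity) hbound s).trans_eq ?_
  simp only [← Real.exp_nat_mul, ← Real.exp_add, div_eq_mul_inv, ← mul_sum]
  ring_nf

theorem sum_totient_ratio_polynomial_prime_pow_le_general (f : ℤ[X])
    (hf : ∀ p : ℕ, p.Prime → f.eval (p : ℤ) ≠ 0) :
    ∃ C : ℝ, 0 < C ∧ ∀ x : ℝ, 2 ≤ x → ∀ s : ℕ, 0 < s →
      ∑ p ∈ ⌊x⌋₊.primesLE,
          (((f.eval (p : ℤ)).natAbs : ℝ) / Nat.totient (f.eval (p : ℤ)).natAbs) ^ s ≤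
        exp (s * log (log (s + 2)) + C * s) * #⌊x⌋₊.primesLE := by
  have hf0 : f ≠ 0 := by
    rintro rfl
    exact hf 2 Nat.prime_two eval_zero
  set k := ∑ i ∈ f.support, (f.coeff i).natAbs + f.natDegree
  set K := (max f.natDegree f.content.natAbs : ℕ) * ∑' n : ℕ, ((n : ℝ) ^ (3 / 2 : ℝ))⁻¹
  have : 0 ≤ K := mul_nonneg (Nat.cast_nonneg _) (tsum_nonneg fun n => by positivity)
  refine ⟨4 * k + 6 + (230 + 2 * K), by positivity, fun x hx s hs => ?_⟩
  set N := ⌊x⌋₊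
  set B := s * log (log (s + 2)) + (4 * k + 6) * s with hB
  have hN : 2 ≤ N := Nat.le_floor hx
  have hconst : (230 : ℝ) ≤ exp (230 * s) := by
    have : (1 : ℝ) ≤ s := by exact_mod_cast hs
    linarith [Real.add_one_le_exp (230 * (s : ℝ))]
  rw [Nat.primesLE_card_eq_primeCounting]
  calc ∑ p ∈ N.primesLE, (((f.eval (p : ℤ)).natAbs : ℝ) / Nat.totient (f.eval (p : ℤ)).natAbs) ^ s
      ≤ ∑ p ∈ N.primesLE, exp B *
          exp (∑ q ∈ middlePrimes s N with q ∣ (f.eval (p : ℤ)).natAbs, (s / q : ℝ)) :=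
        sum_le_sum fun p hp =>
          div_totient_pow_le hN (natAbs_eval_le_pow f hN (Nat.le_of_mem_primesLE hp)) hs
    _ ≤ exp B * (230 * π N * exp (2 * (s * K))) := by
        rw [← mul_sum]
        gcongr
        exact sum_exp_sum_middlePrimes_le hf0 hN s
    _ ≤ exp B * (exp (230 * s) * π N * exp (2 * (s * K))) := by gcongr
    _ = exp (B + (230 * s + 2 * (s * K))) * π N := by
        rw [Real.exp_add B, Real.exp_add (230 * (s : ℝ))]
        ring
    _ = exp (s * log (log (s + 2)) + (4 * k + 6 + (230 + 2 * K)) * s) * π N := by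
        rw [hB]
        ring_nf

/-- Theorem (Radomskii, Theorem 5, inequality (1)): for a primitive polynomial `f` with
positive leading coefficient mapping primes to positive integers,
`∑_{p ≤ x} (f(p)/φ(f(p)))^s ≤ exp(s log log(s+2) + Cs) π(x)`. -/
theorem sum_totient_ratio_polynomial_prime_pow_le (f : Polynomial ℤ)
    (hlead : 0 < f.leadingCoeff) (hcont : f.content = 1)
    (hpos : ∀ p : ℕ, p.Prime → 0 < f.eval (p : ℤ)) :
    ∃ C : ℝ, 0 < C ∧ ∀ x : ℝ, 2 ≤ x → ∀ s : ℕ, 0 < s →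
      ∑ p ∈ (Finset.range (⌊x⌋₊ + 1)).filter Nat.Prime,
          (((f.eval (p : ℤ)).toNat : ℝ) / (Nat.totient (f.eval (p : ℤ)).toNat : ℝ)) ^ s ≤
        Real.exp (s * Real.log (Real.log (s + 2)) + C * s) *
          (((Finset.range (⌊x⌋₊ + 1)).filter Nat.Prime).card : ℝ) := by
  obtain ⟨C, hC, hbound⟩ :=
    sum_totient_ratio_polynomial_prime_pow_le_general f fun p hp => (hpos p hp).ne'
  refine ⟨C, hC, fun x hx s hs => (sum_congr rfl fun p hp => ?_).trans_le (hbound x hx s hs)⟩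
  rw [show (f.eval (p : ℤ)).toNat = (f.eval (p : ℤ)).natAbs by
    have := hpos p (mem_filter.1 hp).2; omega]
end
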